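/- arXiv:1011.6401 — 2 statements merged into one kernel-verified Lean document; each statement's English description precedes it below -/
import Mathlib

section
/- Consider the pp-wave metric with H = exp(y) on ℝ⁴, i.e. g = −2 du dv − 2 exp(y) du² + dy² + dz². Then every Killing tensor of g is reducible; equivalently, this spacetime admits no irreducible Killing tensors. -/
noncomputable section

/-- Points of (an open subset of) `ℝ⁴`, with coordinates `(u,v,y,z)` indexed by `0,1,2,3`. -/
abbrev Pt : Type := Fin 4 → ℝ

/-- Partial derivative of a function in the `i`-th coordinate direction. -/
def pd (i : Fin 4) (f : Pt → ℝ) (p : Pt) : ℝ :=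
  fderiv ℝ f p (Pi.single i 1)

/-- Kronecker delta `δ^i_a`. -/
def kd (i a : Fin 4) : ℝ := if i = a then 1 else 0

/-- Symmetrized product of Kronecker deltas, `δ_{(a}^i δ_{b)}^j`. -/
def sd (i j a b : Fin 4) : ℝ := (kd i a * kd j b + kd j a * kd i b) / 2

/-- Components of the pp-wave metric `g = -2 du dv - 2H du² + dy² + dz²`. -/
def ppMetric (H : Pt → ℝ) (p : Pt) (a b : Fin 4) : ℝ :=
  if a = 0 ∧ b = 0 then -2 * H p
  else if (a = 0 ∧ b = 1) ∨ (a = 1 ∧ b = 0) then -1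
  else if (a = 2 ∧ b = 2) ∨ (a = 3 ∧ b = 3) then 1
  else 0

/-- Christoffel symbols `Γ^d_{ab}` of the pp-wave metric:
`Γ^v_{uu} = H_{,u}`, `Γ^y_{uu} = Γ^v_{uy} = Γ^v_{yu} = H_{,y}`,
`Γ^z_{uu} = Γ^v_{uz} = Γ^v_{zu} = H_{,z}`, all others zero. -/
def Gamma (H : Pt → ℝ) (p : Pt) (d a b : Fin 4) : ℝ :=
  if d = 1 ∧ a = 0 ∧ b = 0 then pd 0 H p
  else if (d = 2 ∧ a = 0 ∧ b = 0) ∨ (d = 1 ∧ ((a = 0 ∧ b = 2) ∨ (a = 2 ∧ b = 0))) then pd 2 H p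
  else if (d = 3 ∧ a = 0 ∧ b = 0) ∨ (d = 1 ∧ ((a = 0 ∧ b = 3) ∨ (a = 3 ∧ b = 0))) then pd 3 H p
  else 0

/-- Covariant derivative of a covector field: `∇_a X_b = ∂_a X_b - Γ^d_{ab} X_d`. -/
def covD1 (H : Pt → ℝ) (X : Pt → Fin 4 → ℝ) (p : Pt) (a b : Fin 4) : ℝ :=
  pd a (fun q => X q b) p - ∑ d, Gamma H p d a b * X p d

/-- Covariant derivative of a 2-tensor field:
`∇_c T_{ab} = ∂_c T_{ab} - Γ^d_{ca} T_{db} - Γ^d_{cb} T_{ad}`. -/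
def covD2 (H : Pt → ℝ) (T : Pt → Fin 4 → Fin 4 → ℝ) (p : Pt) (c a b : Fin 4) : ℝ :=
  pd c (fun q => T q a b) p - ∑ d, Gamma H p d c a * T p d b
    - ∑ d, Gamma H p d c b * T p a d

/-- A Killing vector of the pp-wave metric on `U`, given by its covariant components:
a smooth covector field with `∇_{(a}X_{b)} = 0` on `U`. -/
def IsKillingVector (H : Pt → ℝ) (U : Set Pt) (X : Pt → Fin 4 → ℝ) : Prop :=
  (∀ a, ContDiffOn ℝ (⊤ : ℕ∞) (fun p => X p a) U) ∧
  ∀ p ∈ U, ∀ a b, covD1 H X p a b + covD1 H X p b a = 0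

/-- A (second order) Killing tensor of the pp-wave metric on `U`: a smooth symmetric
2-tensor field with `∇_{(c}K_{ab)} = 0` on `U`. -/
def IsKillingTensor (H : Pt → ℝ) (U : Set Pt) (K : Pt → Fin 4 → Fin 4 → ℝ) : Prop :=
  (∀ a b, ContDiffOn ℝ (⊤ : ℕ∞) (fun p => K p a b) U) ∧
  (∀ p a b, K p a b = K p b a) ∧
  ∀ p ∈ U, ∀ a b c,
    covD2 H K p c a b + covD2 H K p a b c + covD2 H K p b c a = 0

/-- A Killing tensor is reducible if (on `U`) it is a constant-coefficient linear combination
of the metric `g_{ab}` and finitely many symmetrized products `X_{(a}Y_{b)}` of Killing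
vectors `X`, `Y`. -/
def IsReducible (H : Pt → ℝ) (U : Set Pt) (K : Pt → Fin 4 → Fin 4 → ℝ) : Prop :=
  ∃ (c₀ : ℝ) (n : ℕ) (c : Fin n → ℝ) (X Y : Fin n → Pt → Fin 4 → ℝ),
    (∀ i, IsKillingVector H U (X i)) ∧ (∀ i, IsKillingVector H U (Y i)) ∧
    ∀ p ∈ U, ∀ a b, K p a b =
      c₀ * ppMetric H p a b + ∑ i, c i * ((X i p a * Y i p b + X i p b * Y i p a) / 2)

/-!
The profile `exp(y)` is reproduced by `∂_y`, and differentiating the Killing equations shows that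
the relevant combinations of components are polynomial in `y` of bounded degree. Since a
polynomial in `y` is never `exp(y)` times a nonzero polynomial in `y`, every consequence of the
form `f = exp(y) g` splits into `f = 0` and `g = 0`. This makes `K_vv` a quadratic polynomial in
`u` alone, which is also the `vv`-component of a combination of products of the Killing vectors
`∂_u` and `u∂_u - v∂_v - 2∂_y`. After subtracting that combination the same happens successively
to `K_vz`, `K_uv`, `K_yy`, `K_zz`, `K_uz` and `K_uu`, each being cancelled by products of the five
Killing vectors, with the metric needed once, for `K_yy`.
-/

open scoped ContDiff Manifold

section Derivation

variable {k A : Type*} [CommRing A]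

@[simp]
theorem derivation_ofNat [CommSemiring k] [Algebra k A] (D : Derivation k A A) (n : ℕ)
    [n.AtLeastTwo] : D ofNat(n) = 0 :=
  D.map_natCast n

theorem ofNat_mul_left_cancel (k : Type*) [Field k] [CharZero k] [Algebra k A] (n : ℕ)
    [n.AtLeastTwo] {f g : A} (h : (ofNat(n) : A) * f = ofNat(n) * g) : f = g := by
  have hn : IsUnit (ofNat(n) : A) := map_ofNat (algebraMap k A) n ▸
    (IsUnit.mk0 (ofNat(n) : k) (OfNat.ofNat_ne_zero n)).map (algebraMap k A)
  exact hn.mul_left_cancel h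

/-- If `D h = h` and `h` is a unit, then `f` and `h * g` lie in the generalized eigenspaces of `D`
for the distinct eigenvalues `0` and `1`, which meet only in `0`. -/
theorem eq_zero_of_eq_mul_of_iterate_derivation_eq_zero [Field k] [Algebra k A]
    (D : Derivation k A A) {h f g : A} (hD : D h = h) (hh : IsUnit h) {m n : ℕ}
    (hf : D^[m] f = 0) (hg : D^[n] g = 0) (hfg : f = h * g) : g = 0 := by
  have hf0 : f ∈ Module.End.genEigenspace (D : A →ₗ[k] A) 0 m := by
    rw [Module.End.mem_genEigenspace_nat, zero_smul, sub_zero, LinearMap.mem_ker,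
      Module.End.pow_apply]
    exact hf
  have hshift : ∀ j, (((D : A →ₗ[k] A) - (1 : k) • 1) ^ j) (h * g) = h * D^[j] g := by
    intro j
    induction j with
    | zero => rfl
    | succ j ih =>
      rw [pow_succ', Module.End.mul_apply, ih, Function.iterate_succ_apply']
      simp [hD]
      ring
  have hf1 : f ∈ Module.End.genEigenspace (D : A →ₗ[k] A) 1 n := by
    rw [Module.End.mem_genEigenspace_nat, LinearMap.mem_ker, hfg, hshift, hg, mul_zero]
  have hf_zero : f = 0 := Submodule.disjoint_def.1
    (Module.End.disjoint_genEigenspace _ zero_ne_one _ _) f hf0 hf1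
  exact hh.mul_right_eq_zero.1 (hfg ▸ hf_zero)

end Derivation

/-- The algebra of smooth real functions on `E`; bundling smoothness makes every derivative of an
identity between smooth functions available by applying a derivation to both sides. -/
abbrev SmoothFunction (E : Type*) [NormedAddCommGroup E] [NormedSpace ℝ E] : Type _ :=
  C^∞⟮𝓘(ℝ, E), E; ℝ⟯

namespace SmoothFunction

variable {E : Type*} [NormedAddCommGroup E] [NormedSpace ℝ E]

/-- A function known to be smooth, as an element of the algebra of smooth functions. -/
def ofContDiff (f : E → ℝ) (hf : ContDiff ℝ ∞ f) : SmoothFunction E :=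
  ⟨f, hf.contMDiff⟩

theorem contDiff_coe (f : SmoothFunction E) : ContDiff ℝ ∞ f :=
  f.contMDiff.contDiff

theorem differentiable_coe (f : SmoothFunction E) : Differentiable ℝ f :=
  (contDiff_coe f).differentiable (by simp)

@[simp]
theorem ofNat_apply (n : ℕ) [n.AtLeastTwo] (p : E) : (ofNat(n) : SmoothFunction E) p = ofNat(n) :=
  map_ofNat (ContMDiffMap.evalRingHom p) n

@[simp]
theorem sum_apply {ι : Type*} (s : Finset ι) (f : ι → SmoothFunction E) (p : E) :
    (∑ i ∈ s, f i) p = ∑ i ∈ s, f i p :=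
  map_sum (ContMDiffMap.evalRingHom p) f s

theorem isUnit_of_forall_ne_zero (f : SmoothFunction E) (hf : ∀ p, f p ≠ 0) : IsUnit f :=
  IsUnit.of_mul_eq_one (ofContDiff (fun p => (f p)⁻¹) ((contDiff_coe f).inv hf))
    (ContMDiffMap.ext fun p => mul_inv_cancel₀ (hf p))

/-- The derivative of smooth functions in the constant direction `w`. -/
def dirDeriv (w : E) : Derivation ℝ (SmoothFunction E) (SmoothFunction E) :=
  Derivation.mk'
    { toFun := fun f => ofContDiff (fun p => fderiv ℝ f p w)
        (((contDiff_coe f).fderiv_right (by simp)).clm_apply contDiff_const)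
      map_add' := fun f g => ContMDiffMap.ext fun p =>
        congrArg (· w) (fderiv_add (differentiable_coe f p) (differentiable_coe g p))
      map_smul' := fun c f => ContMDiffMap.ext fun p =>
        congrArg (· w) (fderiv_const_smul (differentiable_coe f p) c) }
    fun f g => ContMDiffMap.ext fun p =>
      congrArg (· w) (fderiv_mul (differentiable_coe f p) (differentiable_coe g p))

theorem dirDeriv_apply (w : E) (f : SmoothFunction E) (p : E) :
    dirDeriv w f p = fderiv ℝ f p w :=
  rfl

theorem dirDeriv_comm (w w' : E) (f : SmoothFunction E) :
    dirDeriv w (dirDeriv w' f) = dirDeriv w' (dirDeriv w f) := by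
  ext p
  have hd : DifferentiableAt ℝ (fderiv ℝ f) p :=
    ((contDiff_coe f).fderiv_right (m := ∞) (by simp)).differentiable (by simp) p
  have second_deriv (w w' : E) :
      dirDeriv w (dirDeriv w' f) p = fderiv ℝ (fderiv ℝ f) p w w' := by
    change fderiv ℝ (fun q => fderiv ℝ f q w') p w = _
    simp [fderiv_clm_apply hd (differentiableAt_const w')]
  have hsymm : IsSymmSndFDerivAt ℝ f p :=
    (contDiff_coe f).contDiffAt.isSymmSndFDerivAt
      (by simpa using (WithTop.coe_le_coe.2 (le_top : (2 : ℕ∞) ≤ ⊤)))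
  rw [second_deriv, second_deriv, hsymm.eq]

section Coordinates

variable {ι : Type*} [Fintype ι]

/-- The `i`-th coordinate function. -/
def coord (i : ι) : SmoothFunction (ι → ℝ) :=
  ofContDiff (fun p => p i) (contDiff_apply ℝ ℝ i)

variable [DecidableEq ι]

/-- The partial derivative `∂ᵢ` as a derivation of the algebra of smooth functions. -/
def partialDeriv (i : ι) : Derivation ℝ (SmoothFunction (ι → ℝ)) (SmoothFunction (ι → ℝ)) :=
  dirDeriv (Pi.single i 1)

theorem partialDeriv_comm (i j : ι) (f : SmoothFunction (ι → ℝ)) :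
    partialDeriv i (partialDeriv j f) = partialDeriv j (partialDeriv i f) :=
  dirDeriv_comm _ _ f

@[simp]
theorem partialDeriv_coord (i j : ι) :
    partialDeriv i (coord j) = if i = j then 1 else 0 := by
  ext p
  have hcoord : fderiv ℝ (fun q : ι → ℝ => q j) p = ContinuousLinearMap.proj j :=
    (ContinuousLinearMap.proj (R := ℝ) (φ := fun _ : ι => ℝ) j).fderiv
  change fderiv ℝ (fun q : ι → ℝ => q j) p (Pi.single i 1) = _
  rw [hcoord]
  by_cases h : i = j
  · subst h; simp
  · simp [h, Ne.symm h]

theorem eq_const_of_partialDeriv_eq_zero {f : SmoothFunction (ι → ℝ)}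
    (hf : ∀ i, partialDeriv i f = 0) (p q : ι → ℝ) : f p = f q := by
  refine is_const_of_fderiv_eq_zero (differentiable_coe f) (fun r => ?_) p q
  apply ContinuousLinearMap.coe_injective
  exact (Pi.basisFun ℝ ι).ext fun i => by
    simpa [partialDeriv, dirDeriv_apply] using congrArg (fun g : SmoothFunction _ => g r) (hf i)

theorem exists_eq_smul_one_of_partialDeriv_eq_zero {f : SmoothFunction (ι → ℝ)}
    (hf : ∀ i, partialDeriv i f = 0) : ∃ c : ℝ, f = c • 1 :=
  ⟨f 0, ContMDiffMap.ext fun p => by simpa using eq_const_of_partialDeriv_eq_zero hf p 0⟩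

theorem exists_eq_sum_smul_coord_add {f : SmoothFunction (ι → ℝ)} {a : ι → ℝ}
    (hf : ∀ i, partialDeriv i f = a i • 1) : ∃ c : ℝ, f = ∑ i, a i • coord i + c • 1 := by
  obtain ⟨c, hc⟩ := exists_eq_smul_one_of_partialDeriv_eq_zero (f := f - ∑ i, a i • coord i)
    fun j => by simp [hf]
  exact ⟨c, sub_eq_iff_eq_add'.1 hc⟩

theorem exists_eq_smul_coord_add {f : SmoothFunction (ι → ℝ)} {i : ι} {a : ℝ}
    (hi : partialDeriv i f = a • 1) (hf : ∀ j ≠ i, partialDeriv j f = 0) :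
    ∃ c : ℝ, f = a • coord i + c • 1 := by
  obtain ⟨c, hc⟩ := exists_eq_sum_smul_coord_add (f := f) (a := Pi.single i a) fun j => by
    rcases eq_or_ne j i with rfl | hj
    · simp [hi]
    · simp [hj, hf j hj]
  exact ⟨c, by simpa [Pi.single_apply] using hc⟩

theorem exists_eq_affine {f : SmoothFunction (ι → ℝ)} {i : ι}
    (hi : partialDeriv i (partialDeriv i f) = 0) (hf : ∀ j ≠ i, partialDeriv j f = 0) :
    ∃ a b : ℝ, f = a • coord i + b • 1 := by
  obtain ⟨a, ha⟩ := exists_eq_smul_one_of_partialDeriv_eq_zero (f := partialDeriv i f) fun j => by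
    rcases eq_or_ne j i with rfl | hj
    · exact hi
    · rw [partialDeriv_comm, hf j hj, map_zero]
  exact ⟨a, exists_eq_smul_coord_add ha hf⟩

theorem exists_eq_quadratic {f : SmoothFunction (ι → ℝ)} {i : ι}
    (hi : partialDeriv i (partialDeriv i (partialDeriv i f)) = 0)
    (hf : ∀ j ≠ i, partialDeriv j f = 0) :
    ∃ a b c : ℝ, f = a • coord i ^ 2 + b • coord i + c • 1 := by
  obtain ⟨a, b, hab⟩ := exists_eq_affine (f := partialDeriv i f) hi fun j hj => by
    rw [partialDeriv_comm, hf j hj, map_zero]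
  obtain ⟨c, hc⟩ := exists_eq_smul_coord_add (f := f - (a / 2) • coord i ^ 2) (i := i) (a := b)
    (by
      simp only [map_sub, hab, Derivation.map_smul, Derivation.leibniz_pow, partialDeriv_coord]
      ext p
      simp
      ring)
    fun j hj => by simp [hf j hj, hj, Derivation.leibniz_pow]
  exact ⟨a / 2, b, c, by rw [add_assoc, ← hc, add_sub_cancel]⟩

end Coordinates

end SmoothFunction

open SmoothFunction

section KillingTensors

/-- Smooth covector fields, given by their components. -/
abbrev SmoothCovector : Type := Fin 4 → SmoothFunction Pt

/-- Smooth 2-tensor fields, given by their covariant components. -/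
abbrev SmoothTensor : Type := Fin 4 → Fin 4 → SmoothFunction Pt

/-- The covector field with components `X`, in the unbundled form used by `IsKillingVector`. -/
def SmoothCovector.toField (X : SmoothCovector) (p : Pt) (a : Fin 4) : ℝ := X a p

/-- The tensor field with components `K`, in the unbundled form used by `IsKillingTensor`. -/
def SmoothTensor.toField (K : SmoothTensor) (p : Pt) (a b : Fin 4) : ℝ := K a b p

theorem pd_coe (i : Fin 4) (f : SmoothFunction Pt) (p : Pt) : pd i f p = partialDeriv i f p :=
  rfl

theorem covD1_toField (H : Pt → ℝ) (X : SmoothCovector) (p : Pt) (a b : Fin 4) :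
    covD1 H X.toField p a b = partialDeriv a (X b) p - ∑ d, Gamma H p d a b * X d p :=
  rfl

theorem covD2_toField (H : Pt → ℝ) (K : SmoothTensor) (p : Pt) (c a b : Fin 4) :
    covD2 H K.toField p c a b = partialDeriv c (K a b) p - ∑ d, Gamma H p d c a * K d b p
      - ∑ d, Gamma H p d c b * K a d p :=
  rfl

/-- The symmetrized product `X_{(a}Y_{b)}`. -/
def symProd (X Y : SmoothCovector) : SmoothTensor :=
  fun a b => (1 / 2 : ℝ) • (X a * Y b + X b * Y a)

@[simp]
theorem symProd_apply (X Y : SmoothCovector) (a b : Fin 4) (p : Pt) :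
    symProd X Y a b p = (X a p * Y b p + X b p * Y a p) / 2 :=
  one_div_mul_eq_div _ _

theorem covD2_symProd (H : Pt → ℝ) (X Y : SmoothCovector) (p : Pt) (c a b : Fin 4) :
    covD2 H (symProd X Y).toField p c a b =
      (covD1 H X.toField p c a * Y b p + X a p * covD1 H Y.toField p c b
        + covD1 H X.toField p c b * Y a p + X b p * covD1 H Y.toField p c a) / 2 := by
  simp only [covD2_toField, covD1_toField, symProd, Derivation.map_smul, map_add,
    Derivation.leibniz, smul_eq_mul, ContMDiffMap.coe_smul, ContMDiffMap.coe_add,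
    ContMDiffMap.coe_mul, Pi.smul_apply, Pi.add_apply, Pi.mul_apply, Fin.sum_univ_four]
  ring

variable (H : SmoothFunction Pt)

/-- The metric `-2 du dv - 2H du² + dy² + dz²` with bundled components. -/
def metric : SmoothTensor :=
  ![![-2 * H, -1, 0, 0], ![-1, 0, 0, 0], ![0, 0, 1, 0], ![0, 0, 0, 1]]

theorem metric_apply (a b : Fin 4) (p : Pt) : metric H a b p = ppMetric H p a b := by
  fin_cases a <;> fin_cases b <;> simp [metric, ppMetric]

/-- The Killing vectors of the pp-wave with profile `H`, by their covariant components. -/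
def killingVectors : Set SmoothCovector :=
  {X | IsKillingVector H Set.univ X.toField}

theorem mem_killingVectors {X : SmoothCovector} :
    X ∈ killingVectors H ↔
      ∀ p a b, covD1 H X.toField p a b + covD1 H X.toField p b a = 0 := by
  refine ⟨fun hX p => hX.2 p trivial, fun hX => ⟨fun a => ?_, fun p _ => hX p⟩⟩
  exact (contDiff_coe (X a)).contDiffOn

theorem isKillingTensor_toField {K : SmoothTensor} :
    IsKillingTensor H Set.univ K.toField ↔ (∀ a b, K a b = K b a) ∧
      ∀ p a b c, covD2 H K.toField p c a b + covD2 H K.toField p a b c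
        + covD2 H K.toField p b c a = 0 := by
  constructor
  · exact fun hK =>
      ⟨fun a b => ContMDiffMap.ext fun p => hK.2.1 p a b, fun p => hK.2.2 p trivial⟩
  · exact fun hK => ⟨fun a b => (contDiff_coe (K a b)).contDiffOn,
      fun p a b => congrArg (fun f : SmoothFunction Pt => f p) (hK.1 a b), fun p _ => hK.2 p⟩

/-- The Killing tensors of the pp-wave with profile `H`, by their covariant components. -/
def killingTensors : Submodule ℝ SmoothTensor where
  carrier := {K | IsKillingTensor H Set.univ K.toField}
  zero_mem' := by
    simp [isKillingTensor_toField, covD2_toField]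
  add_mem' {K L} hK hL := by
    simp only [Set.mem_ofPred_eq, isKillingTensor_toField] at hK hL ⊢
    refine ⟨fun a b => congrArg₂ (· + ·) (hK.1 a b) (hL.1 a b), fun p a b c => ?_⟩
    have hKL := congrArg₂ (· + ·) (hK.2 p a b c) (hL.2 p a b c)
    simp only [covD2_toField, Pi.add_apply, map_add, ContMDiffMap.coe_add, mul_add,
      Finset.sum_add_distrib] at hKL ⊢
    linarith
  smul_mem' r K hK := by
    simp only [Set.mem_ofPred_eq, isKillingTensor_toField] at hK ⊢
    refine ⟨fun a b => congrArg (r • ·) (hK.1 a b), fun p a b c => ?_⟩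
    have hrK := congrArg (r * ·) (hK.2 p a b c)
    simp only [covD2_toField, Pi.smul_apply, Derivation.map_smul, ContMDiffMap.coe_smul,
      smul_eq_mul, mul_left_comm _ r, ← Finset.mul_sum] at hrK ⊢
    linarith

theorem mem_killingTensors {K : SmoothTensor} :
    K ∈ killingTensors H ↔ (∀ a b, K a b = K b a) ∧
      ∀ p a b c, covD2 H K.toField p c a b + covD2 H K.toField p a b c
        + covD2 H K.toField p b c a = 0 :=
  isKillingTensor_toField H

variable {H}

theorem metric_mem_killingTensors (hH : partialDeriv 1 H = 0) :
    metric H ∈ killingTensors H := by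
  have parallel (p : Pt) (c a b : Fin 4) : covD2 H (metric H).toField p c a b = 0 := by
    rw [covD2_toField]
    fin_cases c <;> fin_cases a <;> fin_cases b <;>
      simp [metric, Gamma, pd_coe, Fin.sum_univ_four, hH] <;> ring
  refine (mem_killingTensors H).2 ⟨fun a b => ?_, fun p a b c => by simp [parallel]⟩
  fin_cases a <;> fin_cases b <;> rfl

theorem symProd_mem_killingTensors {X Y : SmoothCovector} (hX : X ∈ killingVectors H)
    (hY : Y ∈ killingVectors H) : symProd X Y ∈ killingTensors H := by
  rw [mem_killingVectors] at hX hY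
  refine (mem_killingTensors H).2 ⟨fun a b => by simp only [symProd, add_comm], ?_⟩
  intro p a b c
  simp only [covD2_symProd]
  linear_combination (Y a p * hX p b c + Y b p * hX p c a + Y c p * hX p a b
    + X a p * hY p b c + X b p * hY p c a + X c p * hY p a b) / 2

variable (H) in
/-- The reducible tensors: the span of the metric and the symmetrized products of Killing
vectors. -/
def reducibleTensors : Submodule ℝ SmoothTensor :=
  Submodule.span ℝ (insert (metric H) (Set.image2 symProd (killingVectors H) (killingVectors H)))

theorem smul_metric_mem_reducibleTensors (c : ℝ) : c • metric H ∈ reducibleTensors H :=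
  Submodule.smul_mem _ c (Submodule.subset_span (Set.mem_insert _ _))

theorem smul_symProd_mem_reducibleTensors (c : ℝ) {X Y : SmoothCovector}
    (hX : X ∈ killingVectors H) (hY : Y ∈ killingVectors H) :
    c • symProd X Y ∈ reducibleTensors H :=
  Submodule.smul_mem _ c (Submodule.subset_span
    (Set.mem_insert_of_mem _ (Set.mem_image2_of_mem hX hY)))

theorem reducibleTensors_le_killingTensors (hH : partialDeriv 1 H = 0) :
    reducibleTensors H ≤ killingTensors H := by
  refine Submodule.span_le.2 (Set.insert_subset (metric_mem_killingTensors hH) ?_)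
  rintro _ ⟨X, hX, Y, hY, rfl⟩
  exact symProd_mem_killingTensors hX hY

theorem isReducible_of_mem_reducibleTensors {K : SmoothTensor} (hK : K ∈ reducibleTensors H) :
    IsReducible H Set.univ K.toField := by
  obtain ⟨c₀, L, hL, rfl⟩ := Submodule.mem_span_insert.1 hK
  obtain ⟨n, c, g, rfl⟩ := Submodule.mem_span_set'.1 hL
  choose X hX Y hY hg using fun i => (g i).2
  refine ⟨c₀, n, c, fun i => (X i).toField, fun i => (Y i).toField, hX, hY, fun p _ a b => ?_⟩
  simp only [SmoothTensor.toField, SmoothCovector.toField, ← hg, metric_apply,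
    symProd_apply, Pi.add_apply, Pi.smul_apply, Finset.sum_apply, ContMDiffMap.coe_add,
    ContMDiffMap.coe_smul, smul_eq_mul, SmoothFunction.sum_apply]

end KillingTensors

/-- The profile function `exp(y)`. -/
def expY : SmoothFunction Pt :=
  ofContDiff (fun p => Real.exp (p 2)) (Real.contDiff_exp.comp (contDiff_apply ℝ ℝ 2))

@[simp]
theorem expY_apply (p : Pt) : expY p = Real.exp (p 2) :=
  rfl

theorem isUnit_expY : IsUnit expY :=
  isUnit_of_forall_ne_zero _ fun p => (Real.exp_pos (p 2)).ne'

@[simp]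
theorem partialDeriv_expY (i : Fin 4) : partialDeriv i expY = if i = 2 then expY else 0 := by
  ext p
  change fderiv ℝ (fun q : Pt => Real.exp (q 2)) p (Pi.single i 1) = _
  have hcoord : HasFDerivAt (fun q : Pt => q 2) (ContinuousLinearMap.proj (R := ℝ) 2) p :=
    (ContinuousLinearMap.proj (R := ℝ) (φ := fun _ : Fin 4 => ℝ) 2).hasFDerivAt
  rw [hcoord.exp.fderiv]
  by_cases h : i = 2
  · subst h; simp
  · simp [h, Ne.symm h]

theorem eq_zero_of_eq_expY_mul {f g : SmoothFunction Pt} (m n : ℕ)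
    (hf : (partialDeriv 2)^[m] f = 0) (hg : (partialDeriv 2)^[n] g = 0)
    (hfg : f = expY * g) : g = 0 :=
  eq_zero_of_eq_mul_of_iterate_derivation_eq_zero (partialDeriv 2) (by simp) isUnit_expY hf hg hfg

local notation "∂u" => partialDeriv (0 : Fin 4)
local notation "∂v" => partialDeriv (1 : Fin 4)
local notation "∂y" => partialDeriv (2 : Fin 4)
local notation "∂z" => partialDeriv (3 : Fin 4)

theorem eq_zero_of_du_du_eq {f : SmoothFunction Pt}
    (hdu : ∂u (∂u f) = expY * -(f + 3 * ∂y f)) (hdy : ∂y (∂y f) = 0) : f = 0 := by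
  have hf : ∂y (∂y (∂u (∂u f))) = 0 := by
    linear_combination (norm := simp [partialDeriv_comm]) congrArg (∂u <| ∂u ·) hdy
  have hg : ∂y (∂y (-(f + 3 * ∂y f))) = 0 := by
    linear_combination (norm := simp) -hdy - 3 * congrArg ∂y hdy
  have separated := eq_zero_of_eq_expY_mul 2 2 hf hg hdu
  linear_combination (norm := (simp; ring1)) 3 * congrArg ∂y separated - separated + 9 * hdy

/-- The twenty component equations of `∇_{(a}K_{bc)} = 0` for `H = exp(y)`. -/
structure KillingSystem (Kuu Kuv Kuy Kuz Kvv Kvy Kvz Kyy Kyz Kzz : SmoothFunction Pt) :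
    Prop where
  vvv : ∂v Kvv = 0
  vvy : ∂y Kvv + 2 * ∂v Kvy = 0
  vvz : ∂z Kvv + 2 * ∂v Kvz = 0
  vyy : ∂v Kyy + 2 * ∂y Kvy = 0
  vyz : ∂v Kyz + ∂y Kvz + ∂z Kvy = 0
  vzz : ∂v Kzz + 2 * ∂z Kvz = 0
  yyy : ∂y Kyy = 0
  yyz : ∂z Kyy + 2 * ∂y Kyz = 0
  yzz : ∂y Kzz + 2 * ∂z Kyz = 0
  zzz : ∂z Kzz = 0
  uvv : ∂u Kvv + 2 * ∂v Kuv = 0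
  uvy : ∂u Kvy + ∂v Kuy + ∂y Kuv = 2 * expY * Kvv
  uvz : ∂u Kvz + ∂v Kuz + ∂z Kuv = 0
  uyy : ∂u Kyy + 2 * ∂y Kuy = 4 * expY * Kvy
  uyz : ∂u Kyz + ∂y Kuz + ∂z Kuy = 2 * expY * Kvz
  uzz : ∂u Kzz + 2 * ∂z Kuz = 0
  uuv : ∂v Kuu + 2 * ∂u Kuv = 2 * expY * Kvy
  uuy : ∂y Kuu + 2 * ∂u Kuy = expY * (4 * Kuv + 2 * Kyy)
  uuz : ∂z Kuu + 2 * ∂u Kuz = 2 * expY * Kyz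
  uuu : ∂u Kuu = 2 * expY * Kuy

namespace KillingSystem

variable {Kuu Kuv Kuy Kuz Kvv Kvy Kvz Kyy Kyz Kzz : SmoothFunction Pt}

variable (s : KillingSystem Kuu Kuv Kuy Kuz Kvv Kvy Kvz Kyy Kyz Kzz)
include s

attribute [local simp] partialDeriv_comm

theorem dy_dy_Kvy : ∂y (∂y Kvy) = 0 := by
  refine ofNat_mul_left_cancel ℝ 2 ?_
  linear_combination (norm := (simp; ring1)) congrArg ∂y s.vyy - congrArg ∂v s.yyy

theorem dy_dy_dy_Kvv : ∂y (∂y (∂y Kvv)) = 0 := by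
  linear_combination (norm := (simp; ring1)) congrArg (∂y <| ∂y ·) s.vvy
    - congrArg (∂y <| ∂v ·) s.vyy + congrArg (∂v <| ∂v ·) s.yyy

theorem dy_dy_dy_Kvz : ∂y (∂y (∂y Kvz)) = 0 := by
  refine ofNat_mul_left_cancel ℝ 2 ?_
  linear_combination (norm := (simp; ring1)) 2 * congrArg (∂y <| ∂y ·) s.vyz
    - congrArg (∂y <| ∂v ·) s.yyz - congrArg (∂y <| ∂z ·) s.vyy + 2 * congrArg (∂v <| ∂z ·) s.yyy

theorem dy_dy_Kuv : ∂y (∂y Kuv) = expY * (3 * ∂y Kvv + 2 * Kvv) - 2 * ∂u (∂y Kvy) := by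
  refine ofNat_mul_left_cancel ℝ 2 ?_
  linear_combination (norm := (simp; ring1)) 2 * congrArg ∂y s.uvy - congrArg ∂v s.uyy
    + congrArg ∂u s.vyy - 2 * expY * s.vvy

theorem du_du_Kvy_add : ∂u (∂u Kvy) + 2 * ∂u (∂y Kuv) = expY * (3 * ∂u Kvv + 3 * ∂y Kvy + Kvy) := by
  refine ofNat_mul_left_cancel ℝ 2 ?_
  linear_combination (norm := (simp; ring1)) congrArg ∂y s.uuv - congrArg ∂v s.uuy
    + 2 * congrArg ∂u s.uvy - 2 * expY * s.uvv - 2 * expY * s.vyy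

theorem du_du_Kuv : ∂u (∂u Kuv) = expY * (2 * ∂u Kvy + ∂y Kuv) - 2 * expY ^ 2 * Kvv := by
  refine ofNat_mul_left_cancel ℝ 2 ?_
  linear_combination (norm := (simp; ring1)) congrArg ∂u s.uuv - congrArg ∂v s.uuu
    - 2 * expY * s.uvy

theorem dy_Kvv : ∂y Kvv = 0 := by
  have transport : 3 * ∂u (∂u (∂y Kvv)) = expY * (3 * ∂y (∂y Kvv) + ∂y Kvv) := by
    linear_combination (norm := (simp; ring1)) -2 * congrArg ∂v s.du_du_Kvy_add
      + congrArg (∂u <| ∂u ·) s.vvy + 2 * congrArg (∂u <| ∂y ·) s.uvv - 6 * expY * congrArg ∂u s.vvv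
      - 3 * expY * congrArg ∂y s.vvy - expY * s.vvy
  have hf : ∂y (∂y (3 * ∂u (∂u (∂y Kvv)))) = 0 := by
    linear_combination (norm := simp) 3 * congrArg (∂u <| ∂u ·) s.dy_dy_dy_Kvv
  have hg : ∂y (∂y (3 * ∂y (∂y Kvv) + ∂y Kvv)) = 0 := by
    linear_combination (norm := simp) 3 * congrArg ∂y s.dy_dy_dy_Kvv + s.dy_dy_dy_Kvv
  have separated := eq_zero_of_eq_expY_mul 2 2 hf hg transport
  linear_combination (norm := (simp; ring1)) separated - 3 * congrArg ∂y separated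
    + 9 * s.dy_dy_dy_Kvv

theorem dv_Kvy : ∂v Kvy = 0 := by
  refine ofNat_mul_left_cancel ℝ 2 ?_
  linear_combination s.vvy - s.dy_Kvv

theorem Kvy_eq : Kvy = ∂u Kvv := by
  have transport : 3 * ∂u (∂u (∂y Kvy)) = expY * (∂u Kvv - 4 * ∂y Kvy - Kvy) := by
    linear_combination (norm := (simp; ring1)) 2 * congrArg ∂u s.dy_dy_Kuv
      - congrArg ∂y s.du_du_Kvy_add + 3 * expY * congrArg ∂u s.dy_Kvv
      - 3 * expY * s.dy_dy_Kvy
  have hf : ∂y (3 * ∂u (∂u (∂y Kvy))) = 0 := by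
    linear_combination (norm := simp) 3 * congrArg (∂u <| ∂u ·) s.dy_dy_Kvy
  have hg : ∂y (∂y (∂u Kvv - 4 * ∂y Kvy - Kvy)) = 0 := by
    linear_combination (norm := simp) congrArg (∂u <| ∂y ·) s.dy_Kvv
      - 4 * congrArg ∂y s.dy_dy_Kvy - s.dy_dy_Kvy
  have separated := eq_zero_of_eq_expY_mul 1 2 hf hg transport
  linear_combination (norm := (simp; ring1)) 4 * congrArg ∂y separated - separated
    - 4 * congrArg ∂u s.dy_Kvv + 16 * s.dy_dy_Kvy

theorem du_du_du_Kvv : ∂u (∂u (∂u Kvv)) = 0 := by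
  linear_combination (norm := (simp; ring1)) congrArg (∂u <| ∂u ·) s.uvv
    - 2 * congrArg ∂v s.du_du_Kuv + 4 * expY ^ 2 * s.vvv
    - 4 * expY * congrArg ∂u s.dv_Kvy - expY * congrArg ∂y s.uvv + expY * congrArg ∂u s.dy_Kvv

theorem du_dy_Kuv : ∂u (∂y Kuv) = 2 * expY * ∂u Kvv := by
  refine ofNat_mul_left_cancel ℝ 2 ?_
  linear_combination (norm := (simp; ring1)) s.du_du_Kvy_add - congrArg (∂u <| ∂u ·) s.Kvy_eq
    + expY * s.Kvy_eq + 3 * expY * congrArg ∂y s.Kvy_eq + 3 * expY * congrArg ∂u s.dy_Kvv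
    - s.du_du_du_Kvv

theorem dy_Kuv : ∂y Kuv = 2 * expY * Kvv := by
  have dy_dy : ∂y (∂y Kuv) = 2 * expY * Kvv := by
    linear_combination (norm := (simp; ring1)) s.dy_dy_Kuv + 3 * expY * s.dy_Kvv
      - 2 * congrArg (∂u <| ∂y ·) s.Kvy_eq - 2 * congrArg (∂u <| ∂u ·) s.dy_Kvv
  refine isUnit_expY.mul_left_cancel ?_
  linear_combination (norm := (simp; ring1)) congrArg ∂u s.du_dy_Kuv - congrArg ∂y s.du_du_Kuv
    - expY * dy_dy - 2 * expY * congrArg (∂u <| ∂y ·) s.Kvy_eq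
    - 2 * expY * congrArg ∂u s.Kvy_eq - 2 * expY * congrArg (∂u <| ∂u ·) s.dy_Kvv
    + 2 * expY ^ 2 * s.dy_Kvv

theorem du_du_Kuv_eq : ∂u (∂u Kuv) = 2 * expY * ∂u (∂u Kvv) := by
  linear_combination s.du_du_Kuv + expY * s.dy_Kuv
    + 2 * expY * congrArg ∂u s.Kvy_eq

theorem du_dy_Kvz_add : -2 * ∂u (∂y Kvz) - 2 * ∂u (∂u (∂z Kvv)) = expY * ∂z Kvv := by
  linear_combination (norm := (simp; ring1)) congrArg ∂v s.uyz - congrArg ∂y s.uvz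
    - congrArg ∂z s.uvy - congrArg ∂u s.vyz + expY * s.vvz + 2 * congrArg ∂z s.dy_Kuv
    + 2 * congrArg (∂u <| ∂z ·) s.Kvy_eq

theorem dz_Kvv : ∂z Kvv = 0 := by
  have hf : ∂y (∂y (-2 * ∂u (∂y Kvz) - 2 * ∂u (∂u (∂z Kvv)))) = 0 := by
    linear_combination (norm := simp) -2 * congrArg ∂u s.dy_dy_dy_Kvz
      - 2 * congrArg (∂u <| ∂u <| ∂y <| ∂z ·) s.dy_Kvv
  have hg : ∂y (∂z Kvv) = 0 := by
    linear_combination (norm := simp) congrArg ∂z s.dy_Kvv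
  exact eq_zero_of_eq_expY_mul 2 1 hf hg s.du_dy_Kvz_add

theorem du_dy_Kvz : ∂u (∂y Kvz) = 0 := by
  refine ofNat_mul_left_cancel ℝ 2 ?_
  linear_combination (norm := (simp; ring1)) -s.du_dy_Kvz_add - expY * s.dz_Kvv
    - 2 * congrArg (∂u <| ∂u ·) s.dz_Kvv

theorem dv_Kvz (hvv : Kvv = 0) : ∂v Kvz = 0 := by
  subst hvv
  refine ofNat_mul_left_cancel ℝ 2 ?_
  linear_combination (norm := simp) s.vvz

theorem dv_Kuv (hvv : Kvv = 0) : ∂v Kuv = 0 := by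
  subst hvv
  refine ofNat_mul_left_cancel ℝ 2 ?_
  linear_combination (norm := simp) s.uvv

theorem Kvy_eq_zero (hvv : Kvv = 0) : Kvy = 0 := by
  rw [s.Kvy_eq, hvv, map_zero]

theorem dv_Kyy (hvv : Kvv = 0) : ∂v Kyy = 0 := by
  simpa [s.Kvy_eq_zero hvv] using s.vyy

theorem dy_dy_Kvz (hvv : Kvv = 0) : ∂y (∂y Kvz) = 0 := by
  have hvy := s.Kvy_eq_zero hvv
  refine ofNat_mul_left_cancel ℝ 2 ?_
  linear_combination (norm := (simp [hvy]; ring1)) 2 * congrArg ∂y s.vyz - congrArg ∂v s.yyz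
    + congrArg ∂z (s.dv_Kyy hvv)

theorem du_du_Kvz_add (hvv : Kvv = 0) : ∂u (∂u Kvz) + 2 * ∂u (∂z Kuv) = expY * ∂y Kvz := by
  have hvy := s.Kvy_eq_zero hvv
  refine ofNat_mul_left_cancel ℝ 2 ?_
  linear_combination (norm := (simp [hvy]; ring1)) congrArg ∂z s.uuv + 2 * congrArg ∂u s.uvz
    - congrArg ∂v s.uuz - 2 * expY * s.vyz

theorem dy_Kvz (hvv : Kvv = 0) : ∂y Kvz = 0 := by
  refine isUnit_expY.mul_left_cancel ?_
  linear_combination (norm := (simp [hvv]; ring1)) -congrArg ∂y (s.du_du_Kvz_add hvv)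
    + congrArg ∂u s.du_dy_Kvz + 2 * congrArg (∂u <| ∂z ·) s.dy_Kuv - expY * s.dy_dy_Kvz hvv

theorem du_du_du_Kvz (hvv : Kvv = 0) : ∂u (∂u (∂u Kvz)) = 0 := by
  linear_combination (norm := (simp [hvv]; ring1)) congrArg ∂u (s.du_du_Kvz_add hvv)
    - 2 * congrArg ∂z s.du_du_Kuv_eq + expY * s.du_dy_Kvz

theorem dy_dy_Kyz : ∂y (∂y Kyz) = 0 := by
  refine ofNat_mul_left_cancel ℝ 2 ?_
  linear_combination (norm := (simp; ring1)) congrArg ∂y s.yyz - congrArg ∂z s.yyy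

theorem dz_Kvz (hvv : Kvv = 0) : ∂z Kvz = 0 := by
  have transport : 3 * ∂u (∂y (∂z Kyz)) = expY * (2 * ∂z Kvz) := by
    refine ofNat_mul_left_cancel ℝ 2 ?_
    linear_combination (norm := (simp; ring1)) 2 * congrArg (∂y <| ∂z ·) s.uyz
      - congrArg (∂y <| ∂y ·) s.uzz + congrArg (∂u <| ∂y ·) s.yzz - congrArg (∂z <| ∂z ·) s.uyy
      + congrArg (∂u <| ∂z ·) s.yyz + 4 * expY * congrArg ∂z (s.dy_Kvz hvv)
      - 4 * expY * congrArg (∂z <| ∂z ·) (s.Kvy_eq_zero hvv)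
  have hf : ∂y (3 * ∂u (∂y (∂z Kyz))) = 0 := by
    linear_combination (norm := simp) 3 * congrArg (∂u <| ∂z ·) s.dy_dy_Kyz
  have hg : ∂y (2 * ∂z Kvz) = 0 := by
    linear_combination (norm := simp) 2 * congrArg ∂z (s.dy_Kvz hvv)
  refine ofNat_mul_left_cancel ℝ 2 ?_
  linear_combination eq_zero_of_eq_expY_mul 1 1 hf hg transport

theorem dz_dz_Kuv (hvv : Kvv = 0) : ∂z (∂z Kuv) = 0 := by
  refine ofNat_mul_left_cancel ℝ 2 ?_
  linear_combination (norm := (simp; ring1)) 2 * congrArg ∂z s.uvz - congrArg ∂v s.uzz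
    + congrArg ∂u s.vzz - 4 * congrArg ∂u (s.dz_Kvz hvv)

theorem du_dz_Kuv (hvv : Kvv = 0) (hvz : Kvz = 0) : ∂u (∂z Kuv) = 0 := by
  refine ofNat_mul_left_cancel ℝ 2 ?_
  linear_combination (norm := simp [hvz]) s.du_du_Kvz_add hvv

theorem exists_Kuv_eq (hvv : Kvv = 0) (hvz : Kvz = 0) :
    ∃ a b c : ℝ, Kuv = a • coord 0 + b • coord 3 + c • 1 := by
  have du_const : ∀ i, partialDeriv i (∂u Kuv) = 0 := fun i => by
    rw [partialDeriv_comm]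
    fin_cases i
    · simpa [hvv] using s.du_du_Kuv_eq
    · simp [s.dv_Kuv hvv]
    · simp [s.dy_Kuv, hvv]
    · exact s.du_dz_Kuv hvv hvz
  have dz_const : ∀ i, partialDeriv i (∂z Kuv) = 0 := fun i => by
    rw [partialDeriv_comm]
    fin_cases i
    · simpa [partialDeriv_comm] using s.du_dz_Kuv hvv hvz
    · simp [s.dv_Kuv hvv]
    · simp [s.dy_Kuv, hvv]
    · exact s.dz_dz_Kuv hvv
  obtain ⟨a, ha⟩ := exists_eq_smul_one_of_partialDeriv_eq_zero du_const
  obtain ⟨b, hb⟩ := exists_eq_smul_one_of_partialDeriv_eq_zero dz_const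
  obtain ⟨c, hc⟩ := exists_eq_sum_smul_coord_add (f := Kuv) (a := ![a, 0, 0, b]) fun i => by
    fin_cases i
    · simpa using ha
    · simpa using s.dv_Kuv hvv
    · simpa [hvv] using s.dy_Kuv
    · simpa using hb
  exact ⟨a, b, c, by simpa [Fin.sum_univ_four] using hc⟩

theorem Kuy_eq_zero (hvv : Kvv = 0) (huv : Kuv = 0) : Kuy = 0 := by
  have hvy := s.Kvy_eq_zero hvv
  refine eq_zero_of_du_du_eq ?_ ?_
  · refine ofNat_mul_left_cancel ℝ 2 ?_
    linear_combination (norm := (simp [huv, hvy]; ring1)) congrArg ∂u s.uuy - congrArg ∂y s.uuu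
      + 2 * expY * s.uyy
  · refine ofNat_mul_left_cancel ℝ 2 ?_
    linear_combination (norm := (simp [hvy]; ring1)) congrArg ∂y s.uyy - congrArg ∂u s.yyy

theorem Kyz_eq_zero (hvv : Kvv = 0) (hvz : Kvz = 0) (huv : Kuv = 0) : Kyz = 0 := by
  have huy := s.Kuy_eq_zero hvv huv
  refine eq_zero_of_du_du_eq ?_ s.dy_dy_Kyz
  refine ofNat_mul_left_cancel ℝ 2 ?_
  linear_combination (norm := (simp [huv, huy, hvz]; ring1)) congrArg ∂z s.uuy
    - congrArg ∂y s.uuz + 2 * congrArg ∂u s.uyz + 2 * expY * s.yyz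

theorem partialDeriv_Kyy (hvv : Kvv = 0) (hvz : Kvz = 0) (huv : Kuv = 0) (i : Fin 4) :
    partialDeriv i Kyy = 0 := by
  have hvy := s.Kvy_eq_zero hvv
  have huy := s.Kuy_eq_zero hvv huv
  have hyz := s.Kyz_eq_zero hvv hvz huv
  fin_cases i
  · simpa [huy, hvy] using s.uyy
  · exact s.dv_Kyy hvv
  · exact s.yyy
  · simpa [hyz] using s.yyz

theorem dv_Kzz (hvz : Kvz = 0) : ∂v Kzz = 0 := by
  simpa [hvz] using s.vzz

theorem dy_Kzz (hvv : Kvv = 0) (hvz : Kvz = 0) (huv : Kuv = 0) : ∂y Kzz = 0 := by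
  simpa [s.Kyz_eq_zero hvv hvz huv] using s.yzz

theorem du_du_Kuz (hvv : Kvv = 0) (hvz : Kvz = 0) (huv : Kuv = 0) : ∂u (∂u Kuz) = 0 := by
  have huy := s.Kuy_eq_zero hvv huv
  have hyz := s.Kyz_eq_zero hvv hvz huv
  refine ofNat_mul_left_cancel ℝ 2 ?_
  linear_combination (norm := (simp [huy, hyz]; ring1)) congrArg ∂u s.uuz - congrArg ∂z s.uuu

theorem du_du_du_Kzz (hvv : Kvv = 0) (hvz : Kvz = 0) (huv : Kuv = 0) : ∂u (∂u (∂u Kzz)) = 0 := by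
  linear_combination (norm := simp) congrArg (∂u <| ∂u ·) s.uzz
    - 2 * congrArg ∂z (s.du_du_Kuz hvv hvz huv)

theorem dv_Kuz (hvz : Kvz = 0) (huv : Kuv = 0) : ∂v Kuz = 0 := by
  simpa [hvz, huv] using s.uvz

theorem dy_Kuz (hvv : Kvv = 0) (hvz : Kvz = 0) (huv : Kuv = 0) : ∂y Kuz = 0 := by
  have huy := s.Kuy_eq_zero hvv huv
  have hyz := s.Kyz_eq_zero hvv hvz huv
  simpa [huy, hyz, hvz] using s.uyz

theorem dz_Kuz (hzz : Kzz = 0) : ∂z Kuz = 0 := by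
  refine ofNat_mul_left_cancel ℝ 2 ?_
  simpa [hzz] using s.uzz

theorem partialDeriv_Kuu (hvv : Kvv = 0) (hvz : Kvz = 0) (huv : Kuv = 0) (hyy : Kyy = 0)
    (huz : Kuz = 0) (i : Fin 4) : partialDeriv i Kuu = 0 := by
  have hvy := s.Kvy_eq_zero hvv
  have huy := s.Kuy_eq_zero hvv huv
  have hyz := s.Kyz_eq_zero hvv hvz huv
  fin_cases i
  · simpa [huy] using s.uuu
  · simpa [huv, hvy] using s.uuv
  · simpa [huy, huv, hyy] using s.uuy
  · simpa [huz, hyz] using s.uuz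

end KillingSystem

theorem killingSystem_of_mem_killingTensors {K : SmoothTensor} (hK : K ∈ killingTensors expY) :
    KillingSystem (K 0 0) (K 0 1) (K 0 2) (K 0 3) (K 1 1) (K 1 2) (K 1 3) (K 2 2) (K 2 3)
      (K 3 3) := by
  obtain ⟨hsymm, hcyc⟩ := (mem_killingTensors expY).1 hK
  have component (p : Pt) (a b c : Fin 4) := hcyc p a b c
  simp only [covD2_toField, Fin.sum_univ_four] at component
  constructor <;> ext p
  case vvv => linear_combination (norm := (simp [Gamma, hsymm]; ring1)) component p 1 1 1 / 3
  case vvy => linear_combination (norm := (simp [Gamma, hsymm]; ring1)) component p 1 1 2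
  case vvz => linear_combination (norm := (simp [Gamma, hsymm]; ring1)) component p 1 1 3
  case vyy => linear_combination (norm := (simp [Gamma, hsymm]; ring1)) component p 1 2 2
  case vyz => linear_combination (norm := (simp [Gamma, hsymm]; ring1)) component p 1 2 3
  case vzz => linear_combination (norm := (simp [Gamma, hsymm]; ring1)) component p 1 3 3
  case yyy => linear_combination (norm := (simp [Gamma, hsymm]; ring1)) component p 2 2 2 / 3
  case yyz => linear_combination (norm := (simp [Gamma, hsymm]; ring1)) component p 2 2 3
  case yzz => linear_combination (norm := (simp [Gamma, hsymm]; ring1)) component p 2 3 3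
  case zzz => linear_combination (norm := (simp [Gamma, hsymm]; ring1)) component p 3 3 3 / 3
  case uvv => linear_combination (norm := (simp [Gamma, hsymm]; ring1)) component p 0 1 1
  case uvy => linear_combination (norm := (simp [Gamma, pd_coe, hsymm]; ring1)) component p 0 1 2
  case uvz => linear_combination (norm := (simp [Gamma, pd_coe, hsymm]; ring1)) component p 0 1 3
  case uyy => linear_combination (norm := (simp [Gamma, pd_coe, hsymm]; ring1)) component p 0 2 2
  case uyz => linear_combination (norm := (simp [Gamma, pd_coe, hsymm]; ring1)) component p 0 2 3
  case uzz => linear_combination (norm := (simp [Gamma, pd_coe, hsymm]; ring1)) component p 0 3 3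
  case uuv => linear_combination (norm := (simp [Gamma, pd_coe, hsymm]; ring1)) component p 0 0 1
  case uuy => linear_combination (norm := (simp [Gamma, pd_coe, hsymm]; ring1)) component p 0 0 2
  case uuz => linear_combination (norm := (simp [Gamma, pd_coe, hsymm]; ring1)) component p 0 0 3
  case uuu =>
    linear_combination (norm := (simp [Gamma, pd_coe, hsymm]; ring1)) component p 0 0 0 / 3

section KillingVectors

/-- The Killing vector `∂_u`. -/
def translationU : SmoothCovector := ![-2 * expY, -1, 0, 0]

/-- The Killing vector `∂_v`. -/
def translationV : SmoothCovector := ![-1, 0, 0, 0]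

/-- The Killing vector `∂_z`. -/
def translationZ : SmoothCovector := ![0, 0, 0, 1]

/-- The Killing vector `u∂_u - v∂_v - 2∂_y`. -/
def boost : SmoothCovector := ![coord 1 - 2 * coord 0 * expY, -coord 0, -2, 0]

/-- The Killing vector `u∂_z + z∂_v`. -/
def nullRotation : SmoothCovector := ![-coord 3, 0, 0, coord 0]

theorem translationU_mem : translationU ∈ killingVectors expY := by
  refine (mem_killingVectors _).2 fun p a b => ?_
  simp only [covD1_toField]
  fin_cases a <;> fin_cases b <;> simp [translationU, Gamma, pd_coe, Fin.sum_univ_four] <;> ring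

theorem translationV_mem : translationV ∈ killingVectors expY := by
  refine (mem_killingVectors _).2 fun p a b => ?_
  simp only [covD1_toField]
  fin_cases a <;> fin_cases b <;> simp [translationV, Gamma, Fin.sum_univ_four]

theorem translationZ_mem : translationZ ∈ killingVectors expY := by
  refine (mem_killingVectors _).2 fun p a b => ?_
  simp only [covD1_toField]
  fin_cases a <;> fin_cases b <;> simp [translationZ, Gamma, pd_coe, Fin.sum_univ_four]

theorem boost_mem : boost ∈ killingVectors expY := by
  refine (mem_killingVectors _).2 fun p a b => ?_
  simp only [covD1_toField]
  fin_cases a <;> fin_cases b <;> simp [boost, Gamma, pd_coe, Fin.sum_univ_four] <;> ring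

theorem nullRotation_mem : nullRotation ∈ killingVectors expY := by
  refine (mem_killingVectors _).2 fun p a b => ?_
  simp only [covD1_toField]
  fin_cases a <;> fin_cases b <;> simp [nullRotation, Gamma, pd_coe, Fin.sum_univ_four]

end KillingVectors

section Reduction

variable {K L : SmoothTensor}

theorem sub_mem_killingTensors_expY (hK : K ∈ killingTensors expY)
    (hL : L ∈ reducibleTensors expY) : K - L ∈ killingTensors expY :=
  sub_mem hK (reducibleTensors_le_killingTensors (by simp) hL)

theorem mem_reducibleTensors_of_uz_eq_zero (hK : K ∈ killingTensors expY) (hvv : K 1 1 = 0)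
    (hvz : K 1 3 = 0) (huv : K 0 1 = 0) (hyy : K 2 2 = 0) (hzz : K 3 3 = 0) (huz : K 0 3 = 0) :
    K ∈ reducibleTensors expY := by
  have s := killingSystem_of_mem_killingTensors hK
  have hsymm := ((mem_killingTensors expY).1 hK).1
  have hvy := s.Kvy_eq_zero hvv
  have huy := s.Kuy_eq_zero hvv huv
  have hyz := s.Kyz_eq_zero hvv hvz huv
  obtain ⟨c, huu⟩ := exists_eq_smul_one_of_partialDeriv_eq_zero
    (s.partialDeriv_Kuu hvv hvz huv hyy huz)
  have hKc : K = c • symProd translationV translationV := by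
    funext a b
    ext p
    fin_cases a <;> fin_cases b <;>
      simp [translationV, hsymm 1 0, hsymm 2 0, hsymm 2 1, hsymm 3 0, hsymm 3 1, hsymm 3 2,
        huu, huv, huy, huz, hvv, hvy, hvz, hyy, hyz, hzz]
  rw [hKc]
  exact smul_symProd_mem_reducibleTensors c translationV_mem translationV_mem

theorem mem_reducibleTensors_of_zz_eq_zero (hK : K ∈ killingTensors expY) (hvv : K 1 1 = 0)
    (hvz : K 1 3 = 0) (huv : K 0 1 = 0) (hyy : K 2 2 = 0) (hzz : K 3 3 = 0) :
    K ∈ reducibleTensors expY := by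
  have s := killingSystem_of_mem_killingTensors hK
  obtain ⟨a, b, huz⟩ := exists_eq_affine (i := 0) (s.du_du_Kuz hvv hvz huv) fun j hj => by
    fin_cases j
    exacts [absurd rfl hj, s.dv_Kuz hvz huv, s.dy_Kuz hvv hvz huv, s.dz_Kuz hzz]
  let L := (-2 * a) • symProd translationV nullRotation
    + (-2 * b) • symProd translationV translationZ
  have hL : L ∈ reducibleTensors expY := add_mem
    (smul_symProd_mem_reducibleTensors _ translationV_mem nullRotation_mem)
    (smul_symProd_mem_reducibleTensors _ translationV_mem translationZ_mem)
  refine (Submodule.sub_mem_iff_left _ hL).1 (mem_reducibleTensors_of_uz_eq_zero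
    (sub_mem_killingTensors_expY hK hL) ?_ ?_ ?_ ?_ ?_ ?_) <;> ext p <;>
    simp [L, translationV, nullRotation, translationZ, hvv, hvz, huv, hyy, hzz, huz]
  ring

theorem mem_reducibleTensors_of_yy_eq_zero (hK : K ∈ killingTensors expY) (hvv : K 1 1 = 0)
    (hvz : K 1 3 = 0) (huv : K 0 1 = 0) (hyy : K 2 2 = 0) : K ∈ reducibleTensors expY := by
  have s := killingSystem_of_mem_killingTensors hK
  obtain ⟨a, b, c, hzz⟩ := exists_eq_quadratic (i := 0) (s.du_du_du_Kzz hvv hvz huv)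
    fun j hj => by
      fin_cases j
      exacts [absurd rfl hj, s.dv_Kzz hvz, s.dy_Kzz hvv hvz huv, s.zzz]
  let L := a • symProd nullRotation nullRotation + b • symProd translationZ nullRotation
    + c • symProd translationZ translationZ
  have hL : L ∈ reducibleTensors expY := add_mem (add_mem
    (smul_symProd_mem_reducibleTensors a nullRotation_mem nullRotation_mem)
    (smul_symProd_mem_reducibleTensors b translationZ_mem nullRotation_mem))
    (smul_symProd_mem_reducibleTensors c translationZ_mem translationZ_mem)
  refine (Submodule.sub_mem_iff_left _ hL).1 (mem_reducibleTensors_of_zz_eq_zero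
    (sub_mem_killingTensors_expY hK hL) ?_ ?_ ?_ ?_ ?_) <;> ext p <;>
    simp [L, nullRotation, translationZ, hvv, hvz, huv, hyy, hzz]
  ring

theorem mem_reducibleTensors_of_uv_eq_zero (hK : K ∈ killingTensors expY) (hvv : K 1 1 = 0)
    (hvz : K 1 3 = 0) (huv : K 0 1 = 0) : K ∈ reducibleTensors expY := by
  have s := killingSystem_of_mem_killingTensors hK
  obtain ⟨c, hyy⟩ := exists_eq_smul_one_of_partialDeriv_eq_zero (s.partialDeriv_Kyy hvv hvz huv)
  let L := c • metric expY + (2 * c) • symProd translationU translationV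
  have hL : L ∈ reducibleTensors expY := add_mem (smul_metric_mem_reducibleTensors c)
    (smul_symProd_mem_reducibleTensors _ translationU_mem translationV_mem)
  refine (Submodule.sub_mem_iff_left _ hL).1 (mem_reducibleTensors_of_yy_eq_zero
    (sub_mem_killingTensors_expY hK hL) ?_ ?_ ?_ ?_) <;> ext p <;>
    simp [L, metric_apply, ppMetric, translationU, translationV, hvv, hvz, huv, hyy]
  ring

theorem mem_reducibleTensors_of_vz_eq_zero (hK : K ∈ killingTensors expY) (hvv : K 1 1 = 0)
    (hvz : K 1 3 = 0) : K ∈ reducibleTensors expY := by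
  obtain ⟨a, b, c, huv⟩ := (killingSystem_of_mem_killingTensors hK).exists_Kuv_eq hvv hvz
  let L := (2 * a) • symProd boost translationV + (2 * b) • symProd translationU nullRotation
    + (-2 * b) • symProd boost translationZ + (2 * c) • symProd translationU translationV
  have hL : L ∈ reducibleTensors expY := add_mem (add_mem (add_mem
    (smul_symProd_mem_reducibleTensors _ boost_mem translationV_mem)
    (smul_symProd_mem_reducibleTensors _ translationU_mem nullRotation_mem))
    (smul_symProd_mem_reducibleTensors _ boost_mem translationZ_mem))
    (smul_symProd_mem_reducibleTensors _ translationU_mem translationV_mem)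
  refine (Submodule.sub_mem_iff_left _ hL).1 (mem_reducibleTensors_of_uv_eq_zero
    (sub_mem_killingTensors_expY hK hL) ?_ ?_ ?_) <;> ext p <;>
    simp [L, translationU, translationV, translationZ, boost, nullRotation, hvv, hvz, huv]
  all_goals ring

theorem mem_reducibleTensors_of_vv_eq_zero (hK : K ∈ killingTensors expY) (hvv : K 1 1 = 0) :
    K ∈ reducibleTensors expY := by
  have s := killingSystem_of_mem_killingTensors hK
  obtain ⟨a, b, c, hvz⟩ := exists_eq_quadratic (i := 0) (s.du_du_du_Kvz hvv) fun j hj => by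
    fin_cases j
    exacts [absurd rfl hj, s.dv_Kvz hvv, s.dy_Kvz hvv, s.dz_Kvz hvv]
  let L := (-2 * a) • symProd boost nullRotation + (-2 * b) • symProd boost translationZ
    + (-2 * c) • symProd translationU translationZ
  have hL : L ∈ reducibleTensors expY := add_mem (add_mem
    (smul_symProd_mem_reducibleTensors _ boost_mem nullRotation_mem)
    (smul_symProd_mem_reducibleTensors _ boost_mem translationZ_mem))
    (smul_symProd_mem_reducibleTensors _ translationU_mem translationZ_mem)
  refine (Submodule.sub_mem_iff_left _ hL).1 (mem_reducibleTensors_of_vz_eq_zero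
    (sub_mem_killingTensors_expY hK hL) ?_ ?_) <;> ext p <;>
    simp [L, translationU, translationZ, boost, nullRotation, hvv, hvz]
  ring

theorem killingTensors_expY_le_reducibleTensors :
    killingTensors expY ≤ reducibleTensors expY := by
  intro K hK
  have s := killingSystem_of_mem_killingTensors hK
  obtain ⟨a, b, c, hvv⟩ := exists_eq_quadratic (i := 0) s.du_du_du_Kvv fun j hj => by
    fin_cases j
    exacts [absurd rfl hj, s.vvv, s.dy_Kvv, s.dz_Kvv]
  let L := a • symProd boost boost + b • symProd boost translationU
    + c • symProd translationU translationU
  have hL : L ∈ reducibleTensors expY := add_mem (add_mem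
    (smul_symProd_mem_reducibleTensors a boost_mem boost_mem)
    (smul_symProd_mem_reducibleTensors b boost_mem translationU_mem))
    (smul_symProd_mem_reducibleTensors c translationU_mem translationU_mem)
  refine (Submodule.sub_mem_iff_left _ hL).1 (mem_reducibleTensors_of_vv_eq_zero
    (sub_mem_killingTensors_expY hK hL) ?_)
  ext p
  simp [L, translationU, boost, hvv]
  ring

end Reduction

/-- For the pp-wave metric with `H = exp(y)` on `ℝ⁴`, every Killing
tensor is reducible; the spacetime admits no irreducible Killing tensors. -/
theorem stmt5 :
    let H : Pt → ℝ := fun p => Real.exp (p 2)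
    ∀ K, IsKillingTensor H Set.univ K → IsReducible H Set.univ K := by
  change ∀ K, IsKillingTensor expY Set.univ K → IsReducible expY Set.univ K
  intro K hK
  let K' : SmoothTensor :=
    fun a b => ofContDiff (fun p => K p a b) (contDiffOn_univ.1 (hK.1 a b))
  have hK' : K' ∈ killingTensors expY := hK
  exact isReducible_of_mem_reducibleTensors (killingTensors_expY_le_reducibleTensors hK')

end
end

section
/- Let A(u) = (3/16)u⁻² on U = {(u,v,y,z) ∈ ℝ⁴ : u > 0} and consider the conformally flat plane wave metric 2H = A(u)(y² + z²). Then each of the following six symmetric tensor fields is an irreducible Killing tensor of g (here A' = dA/du, and 'with y↔z' means the tensor obtained by interchanging y and z both in coefficients and in indices): (K₁)_{ab} = [−(4/3)A^{3/4} yzv + (1/2)A' A^{−1/4} yz(y²+z²)] δ^u_a δ^u_b + A^{−5/4}A' yz δ_{(a}^u δ_{b)}^v + [−(1/2)A^{−5/4}A' zv + (2/3)A^{3/4} z(3y²+z²)] δ_{(a}^u δ_{b)}^y + [−(1/2)A^{−5/4}A' yv + (2/3)A^{3/4} y(y²+3z²)] δ_{(a}^u δ_{b)}^z + 2A^{−1/4}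 z δ_{(a}^v δ_{b)}^y + 2A^{−1/4} y δ_{(a}^v δ_{b)}^z − 4A^{−1/4} v δ_{(a}^y δ_{b)}^z; (K₂)_{ab} = [−(1/8)u^{−3/2}vy² − (3/32)u^{−5/2}y²(y²+z²)] δ^u_a δ^u_b − u^{−1/2}y² δ_{(a}^u δ_{b)}^v + (1/8)u^{−3/2}y²z δ_{(a}^u δ_{b)}^z + (u^{−1/2}vy + (1/4)u^{−3/2}y³ + (1/8)u^{−3/2}yz²) δ_{(a}^u δ_{b)}^y + 2u^{1/2}y δ_{(a}^v δ_{b)}^y + (−2u^{1/2}v + (1/4)u^{−1/2}z²) δ^y_a δ^y_b − (1/2)u^{−1/2}yz δ_{(a}^y δ_{b)}^z + (1/4)u^{−1/2}y² δ^z_a δ^z_b; K₃ = K₂ with y↔z; (K₄)_{ab} = [−(3/16)u^{−2}v(y²+z²) + (7/128)u^{−3}(y²+z²)²] δ^u_a δ^u_b + [−2v + (3/4)u^{−1}(y²+z²)] δ_{(a}^u δ_{b)}^v + 2u δ^v_a δ^v_b − (1/8)u^{−2}y(y²+z²) δ_{(a}^u δ_{b)}^y − (1/8)u^{−2}z(y²+z²)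 δ_{(a}^u δ_{b)}^z − y δ_{(a}^v δ_{b)}^y − z δ_{(a}^v δ_{b)}^z + (1/4)u^{−1}yz δ_{(a}^y δ_{b)}^z + (v − (1/8)u^{−1}z²) δ^y_a δ^y_b + (v − (1/8)u^{−1}y²) δ^z_a δ^z_b; (K₈)_{ab} = −(2AΓ' + (1/3)A'Γ) y(y²+z²) δ^u_a δ^u_b − 2Γ' y δ_{(a}^u δ_{b)}^v + (2/3)AΓ(3y²+2z²) δ_{(a}^u δ_{b)}^y + (2/3)AΓ yz δ_{(a}^u δ_{b)}^z + 2Γ δ_{(a}^v δ_{b)}^y − (2/3)Γ' z δ_{(a}^y δ_{b)}^z + (2/3)Γ' y δ^z_a δ^z_b where Γ(u) = u^{3/4}; K₁₀ = K₈ with y↔z. -/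
noncomputable section

/-- The coordinate swap `y ↔ z` on indices. -/
def swp : Fin 4 → Fin 4 := fun i => Equiv.swap (2 : Fin 4) 3 i

/-- Interchange `y` and `z`, both in the coefficients and in the indices of a tensor. -/
def swapYZ (K : Pt → Fin 4 → Fin 4 → ℝ) : Pt → Fin 4 → Fin 4 → ℝ :=
  fun p a b => K (fun i => p (swp i)) (swp a) (swp b)

/-- The Killing tensor `K₁` of a conformally flat plane wave with profile `A(u)`. -/
def KTone (A : ℝ → ℝ) : Pt → Fin 4 → Fin 4 → ℝ := fun p a b =>
  (-(4 / 3) * A (p 0) ^ ((3 : ℝ) / 4) * p 2 * p 3 * p 1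
      + (1 / 2) * deriv A (p 0) * A (p 0) ^ (-(1 : ℝ) / 4) * p 2 * p 3
        * ((p 2) ^ 2 + (p 3) ^ 2)) * sd 0 0 a b
    + A (p 0) ^ (-(5 : ℝ) / 4) * deriv A (p 0) * p 2 * p 3 * sd 0 1 a b
    + (-(1 / 2) * A (p 0) ^ (-(5 : ℝ) / 4) * deriv A (p 0) * p 3 * p 1
        + (2 / 3) * A (p 0) ^ ((3 : ℝ) / 4) * p 3 * (3 * (p 2) ^ 2 + (p 3) ^ 2))
      * sd 0 2 a b
    + (-(1 / 2) * A (p 0) ^ (-(5 : ℝ) / 4) * deriv A (p 0) * p 2 * p 1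
        + (2 / 3) * A (p 0) ^ ((3 : ℝ) / 4) * p 2 * ((p 2) ^ 2 + 3 * (p 3) ^ 2))
      * sd 0 3 a b
    + 2 * A (p 0) ^ (-(1 : ℝ) / 4) * p 3 * sd 1 2 a b
    + 2 * A (p 0) ^ (-(1 : ℝ) / 4) * p 2 * sd 1 3 a b
    - 4 * A (p 0) ^ (-(1 : ℝ) / 4) * p 1 * sd 2 3 a b

/-- The Killing tensor `K₂` of the conformally flat plane wave with `A = (3/16)u⁻²`. -/
def KTtwo : Pt → Fin 4 → Fin 4 → ℝ := fun p a b =>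
  (-(1 / 8) * (p 0) ^ (-(3 : ℝ) / 2) * p 1 * (p 2) ^ 2
      - (3 / 32) * (p 0) ^ (-(5 : ℝ) / 2) * (p 2) ^ 2 * ((p 2) ^ 2 + (p 3) ^ 2))
    * sd 0 0 a b
  - (p 0) ^ (-(1 : ℝ) / 2) * (p 2) ^ 2 * sd 0 1 a b
  + (1 / 8) * (p 0) ^ (-(3 : ℝ) / 2) * (p 2) ^ 2 * p 3 * sd 0 3 a b
  + ((p 0) ^ (-(1 : ℝ) / 2) * p 1 * p 2 + (1 / 4) * (p 0) ^ (-(3 : ℝ) / 2) * (p 2) ^ 3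
      + (1 / 8) * (p 0) ^ (-(3 : ℝ) / 2) * p 2 * (p 3) ^ 2) * sd 0 2 a b
  + 2 * (p 0) ^ ((1 : ℝ) / 2) * p 2 * sd 1 2 a b
  + (-2 * (p 0) ^ ((1 : ℝ) / 2) * p 1 + (1 / 4) * (p 0) ^ (-(1 : ℝ) / 2) * (p 3) ^ 2)
    * sd 2 2 a b
  - (1 / 2) * (p 0) ^ (-(1 : ℝ) / 2) * p 2 * p 3 * sd 2 3 a b
  + (1 / 4) * (p 0) ^ (-(1 : ℝ) / 2) * (p 2) ^ 2 * sd 3 3 a b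

/-- The Killing tensor `K₄` of the conformally flat plane wave with `A = (3/16)u⁻²`. -/
def KTfour : Pt → Fin 4 → Fin 4 → ℝ := fun p a b =>
  (-(3 / 16) * p 1 * ((p 2) ^ 2 + (p 3) ^ 2) / (p 0) ^ 2
      + (7 / 128) * ((p 2) ^ 2 + (p 3) ^ 2) ^ 2 / (p 0) ^ 3) * sd 0 0 a b
  + (-2 * p 1 + (3 / 4) * ((p 2) ^ 2 + (p 3) ^ 2) / p 0) * sd 0 1 a b
  + 2 * p 0 * sd 1 1 a b
  - (1 / 8) * p 2 * ((p 2) ^ 2 + (p 3) ^ 2) / (p 0) ^ 2 * sd 0 2 a b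
  - (1 / 8) * p 3 * ((p 2) ^ 2 + (p 3) ^ 2) / (p 0) ^ 2 * sd 0 3 a b
  - p 2 * sd 1 2 a b - p 3 * sd 1 3 a b
  + (1 / 4) * p 2 * p 3 / p 0 * sd 2 3 a b
  + (p 1 - (1 / 8) * (p 3) ^ 2 / p 0) * sd 2 2 a b
  + (p 1 - (1 / 8) * (p 2) ^ 2 / p 0) * sd 3 3 a b

/-- The Killing tensor `K₈` of a conformally flat plane wave with profile `A(u)`,
built from a function `Γ(u)`. -/
def KTeight (A Γf : ℝ → ℝ) : Pt → Fin 4 → Fin 4 → ℝ := fun p a b =>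
  -(2 * A (p 0) * deriv Γf (p 0) + (1 / 3) * deriv A (p 0) * Γf (p 0))
      * p 2 * ((p 2) ^ 2 + (p 3) ^ 2) * sd 0 0 a b
    - 2 * deriv Γf (p 0) * p 2 * sd 0 1 a b
    + (2 / 3) * A (p 0) * Γf (p 0) * (3 * (p 2) ^ 2 + 2 * (p 3) ^ 2) * sd 0 2 a b
    + (2 / 3) * A (p 0) * Γf (p 0) * p 2 * p 3 * sd 0 3 a b
    + 2 * Γf (p 0) * sd 1 2 a b
    - (2 / 3) * deriv Γf (p 0) * p 3 * sd 2 3 a b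
    + (2 / 3) * deriv Γf (p 0) * p 2 * sd 3 3 a b

/-!
Differentiating Killing's equation `∇_{(a}X_{b)} = 0` shows that `X_y`, `X_z` have vanishing second
derivatives in `v, y, z` and that `∂_u∂_a X_b = H_{,b} ∂_a X_v - H_{,a} ∂_b X_v` for `a, b ≠ u`.
The `v`-derivative of the `uu`-equation gives `∂_u²X_v = H_{,y} ∂_y X_v + H_{,z} ∂_z X_v`, whose
transverse derivatives say that the transverse Hessian of `H` annihilates the gradient of `X_v`. If
that Hessian is nondegenerate, then `∂_v X_y = -∂_y X_v = 0` and likewise for `z`, so the `yz`-block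
of a reducible Killing tensor is independent of `v`; this fails for `K₁`, `K₂`, `K₃` and `K₄`.

The `yz`-blocks of `K₈` and `K₁₀` are independent of `v`. However, `∂_y X_z` does not depend on `u`
and, on the axis `y = z = 0` of a plane wave, `X_z` solves the oscillator equation `f'' = -A f` as a
function of `u`. So `f = ∂_y K_zz` solves it for every reducible `K`, whereas `f = (2/3) Γ'` for
`K = K₈`, and `Γ'' = -A Γ` leaves the residual `f'' + A f = -(2/3) A' Γ ≠ 0`.
-/

open scoped ContDiff

section PartialDerivatives

variable {U : Set Pt} {f g : Pt → ℝ} {p : Pt}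

lemma pd_congr (hU : IsOpen U) (h : Set.EqOn f g U) (i : Fin 4) :
    Set.EqOn (pd i f) (pd i g) U := fun p hp => by
  rw [pd, pd, (h.eventuallyEq_of_mem (hU.mem_nhds hp)).fderiv_eq]

lemma differentiableAt_of_contDiffOn (hU : IsOpen U) (hf : ContDiffOn ℝ ∞ f U) (hp : p ∈ U) :
    DifferentiableAt ℝ f p :=
  (hf.contDiffAt (hU.mem_nhds hp)).differentiableAt (by simp)

lemma contDiffOn_pd (hU : IsOpen U) (hf : ContDiffOn ℝ ∞ f U) (i : Fin 4) :
    ContDiffOn ℝ ∞ (pd i f) U :=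
  (hf.fderiv_of_isOpen hU (by simp)).clm_apply contDiffOn_const

lemma differentiableAt_pd (hU : IsOpen U) (hf : ContDiffOn ℝ ∞ f U) (hp : p ∈ U) (i : Fin 4) :
    DifferentiableAt ℝ (pd i f) p :=
  differentiableAt_of_contDiffOn hU (contDiffOn_pd hU hf i) hp

lemma pd_pd_eq_fderiv_fderiv (hU : IsOpen U) (hf : ContDiffOn ℝ ∞ f U) (hp : p ∈ U)
    (i j : Fin 4) :
    pd i (pd j f) p = fderiv ℝ (fderiv ℝ f) p (Pi.single i 1) (Pi.single j 1) := by
  have hd : DifferentiableAt ℝ (fderiv ℝ f) p :=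
    ((hf.fderiv_of_isOpen hU (by simp)).contDiffAt (hU.mem_nhds hp)).differentiableAt
      (by simp : (∞ : WithTop ℕ∞) ≠ 0)
  have h := (hd.hasFDerivAt.clm_apply (hasFDerivAt_const (Pi.single j (1 : ℝ) : Pt) p)).fderiv
  change fderiv ℝ (fun q => fderiv ℝ f q (Pi.single j 1)) p (Pi.single i 1) = _
  rw [h]
  simp

lemma pd_comm (hU : IsOpen U) (hf : ContDiffOn ℝ ∞ f U) (hp : p ∈ U) (i j : Fin 4) :
    pd i (pd j f) p = pd j (pd i f) p := by
  rw [pd_pd_eq_fderiv_fderiv hU hf hp, pd_pd_eq_fderiv_fderiv hU hf hp]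
  exact (hf.contDiffAt (hU.mem_nhds hp)).isSymmSndFDerivAt
    (by rw [minSmoothness_of_isRCLikeNormedField]
        exact WithTop.coe_le_coe.2 (le_top : (2 : ℕ∞) ≤ ⊤)) _ _

lemma kd_self (i : Fin 4) : kd i i = 1 := if_pos rfl

lemma kd_zero_of_ne {a : Fin 4} (ha : a ≠ 0) : kd 0 a = 0 := if_neg ha.symm

lemma kd_of_ne {i a : Fin 4} (h : i ≠ a) : kd i a = 0 := if_neg h

lemma sd_comm (i j a b : Fin 4) : sd i j a b = sd i j b a := by
  simp only [sd]
  ring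

lemma pd_const (i : Fin 4) (c : ℝ) (p : Pt) : pd i (fun _ => c) p = 0 := by
  simp [pd]

lemma pd_coord (i j : Fin 4) (p : Pt) : pd i (fun q => q j) p = kd j i := by
  rw [pd, (hasFDerivAt_apply (𝕜 := ℝ) j p).fderiv]
  simp [kd, Pi.single_apply]

lemma pd_comp_u {s : ℝ → ℝ} (hs : DifferentiableAt ℝ s (p 0)) (i : Fin 4) :
    pd i (fun q => s (q 0)) p = kd 0 i * deriv s (p 0) := by
  have h : HasFDerivAt (fun q : Pt => s (q 0)) _ p :=
    hs.hasDerivAt.comp_hasFDerivAt p (hasFDerivAt_apply (𝕜 := ℝ) (0 : Fin 4) p)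
  rw [pd, h.fderiv]
  simp [kd, Pi.single_apply]

lemma pd_neg (i : Fin 4) : pd i (fun q => -f q) p = -pd i f p := by
  rw [pd, fderiv_fun_neg]; rfl

lemma pd_add (hf : DifferentiableAt ℝ f p) (hg : DifferentiableAt ℝ g p) (i : Fin 4) :
    pd i (fun q => f q + g q) p = pd i f p + pd i g p := by
  rw [pd, fderiv_fun_add hf hg]; rfl

lemma pd_sub (hf : DifferentiableAt ℝ f p) (hg : DifferentiableAt ℝ g p) (i : Fin 4) :
    pd i (fun q => f q - g q) p = pd i f p - pd i g p := by
  rw [pd, fderiv_fun_sub hf hg]; rfl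

lemma pd_mul (hf : DifferentiableAt ℝ f p) (hg : DifferentiableAt ℝ g p) (i : Fin 4) :
    pd i (fun q => f q * g q) p = f p * pd i g p + pd i f p * g p := by
  rw [pd, fderiv_fun_mul hf hg]; simp [pd, mul_comm]

lemma pd_const_mul (hf : DifferentiableAt ℝ f p) (c : ℝ) (i : Fin 4) :
    pd i (fun q => c * f q) p = c * pd i f p := by
  rw [pd_mul (differentiableAt_const c) hf, pd_const, zero_mul, add_zero]

lemma pd_pow (hf : DifferentiableAt ℝ f p) (n : ℕ) (i : Fin 4) :
    pd i (fun q => f q ^ n) p = n * f p ^ (n - 1) * pd i f p := by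
  rw [pd, fderiv_fun_pow n hf]; simp [pd]

lemma pd_div (hf : DifferentiableAt ℝ f p) (hg : DifferentiableAt ℝ g p) (h0 : g p ≠ 0)
    (i : Fin 4) :
    pd i (fun q => f q / g q) p = (pd i f p * g p - f p * pd i g p) / g p ^ 2 := by
  have hinv : HasFDerivAt (fun q => (g q)⁻¹) _ p :=
    (hasDerivAt_inv h0).comp_hasFDerivAt p hg.hasFDerivAt
  simp only [div_eq_mul_inv, pd_mul hf hinv.differentiableAt]
  simp only [pd, hinv.fderiv, FunLike.coe_smul, Pi.smul_apply, smul_eq_mul]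
  field

lemma pd_rpow_const (hf : DifferentiableAt ℝ f p) (h0 : 0 < f p) (r : ℝ) (i : Fin 4) :
    pd i (fun q => f q ^ r) p = r * (f p ^ r / f p) * pd i f p := by
  rw [pd, (hf.hasFDerivAt.rpow_const (Or.inl h0.ne')).fderiv, Real.rpow_sub_one h0.ne']
  simp [pd]

lemma pd_pd_pd_add (hU : IsOpen U) (hf : ContDiffOn ℝ ∞ f U)
    (hg : ContDiffOn ℝ ∞ g U) (hp : p ∈ U) (i j k : Fin 4) :
    pd i (pd j (pd k fun q => f q + g q)) p = pd i (pd j (pd k f)) p + pd i (pd j (pd k g)) p := by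
  have hadd : ∀ {f g : Pt → ℝ}, ContDiffOn ℝ ∞ f U → ContDiffOn ℝ ∞ g U → ∀ i,
      Set.EqOn (pd i fun q => f q + g q) (fun q => pd i f q + pd i g q) U :=
    fun hf hg i q hq => pd_add (differentiableAt_of_contDiffOn hU hf hq)
      (differentiableAt_of_contDiffOn hU hg hq) i
  have hf' := contDiffOn_pd hU hf k
  have hg' := contDiffOn_pd hU hg k
  exact (pd_congr hU (pd_congr hU (hadd hf hg k) j) i).trans
    ((pd_congr hU (hadd hf' hg' j) i).trans
      (hadd (contDiffOn_pd hU hf' j) (contDiffOn_pd hU hg' j) i)) hp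

lemma pd_pd_pd_const_mul (hU : IsOpen U) (hf : ContDiffOn ℝ ∞ f U) (hp : p ∈ U)
    (c : ℝ) (i j k : Fin 4) :
    pd i (pd j (pd k fun q => c * f q)) p = c * pd i (pd j (pd k f)) p := by
  have hmul : ∀ {f : Pt → ℝ}, ContDiffOn ℝ ∞ f U → ∀ i,
      Set.EqOn (pd i fun q => c * f q) (fun q => c * pd i f q) U :=
    fun hf i q hq => pd_const_mul (differentiableAt_of_contDiffOn hU hf hq) c i
  have hf' := contDiffOn_pd hU hf k
  exact (pd_congr hU (pd_congr hU (hmul hf k) j) i).trans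
    ((pd_congr hU (hmul hf' j) i).trans (hmul (contDiffOn_pd hU hf' j) i)) hp

end PartialDerivatives

section KillingEquations

/-- `H` is a smooth profile `H(u,y,z)` on the open set `U`, given as a function on `ℝ⁴` which does
not depend on `v`. -/
structure IsPPProfile (H : Pt → ℝ) (U : Set Pt) : Prop where
  isOpen : IsOpen U
  contDiffOn : ContDiffOn ℝ ∞ H U
  pd_v : ∀ p ∈ U, pd 1 H p = 0

variable {H : Pt → ℝ} {U : Set Pt} {p : Pt} {a b c : Fin 4}

/-- The matrix of second transverse derivatives (in `y`, `z`) of `H` at `p` is invertible. -/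
def HasNondegenerateHessian (H : Pt → ℝ) (p : Pt) : Prop :=
  pd 2 (pd 2 H) p * pd 3 (pd 3 H) p ≠ pd 2 (pd 3 H) p ^ 2

lemma IsPPProfile.pd_pd_v (hH : IsPPProfile H U) (hp : p ∈ U) (i : Fin 4) :
    pd i (pd 1 H) p = 0 := by
  rw [pd_congr hH.isOpen hH.pd_v i hp, pd_const]

lemma IsPPProfile.pd_v_pd (hH : IsPPProfile H U) (hp : p ∈ U) (i : Fin 4) :
    pd 1 (pd i H) p = 0 := by
  rw [pd_comm hH.isOpen hH.contDiffOn hp, hH.pd_pd_v hp]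

lemma Gamma_comm (H : Pt → ℝ) (p : Pt) (d a b : Fin 4) : Gamma H p d a b = Gamma H p d b a := by
  fin_cases d <;> fin_cases a <;> fin_cases b <;> rfl

lemma sum_Gamma_uu (H : Pt → ℝ) (p : Pt) (T : Fin 4 → ℝ) :
    ∑ d, Gamma H p d 0 0 * T d = pd 0 H p * T 1 + pd 2 H p * T 2 + pd 3 H p * T 3 := by
  simp [Gamma, Fin.sum_univ_four]

lemma sum_Gamma_u (hv : pd 1 H p = 0) (ha : a ≠ 0) (T : Fin 4 → ℝ) :
    ∑ d, Gamma H p d 0 a * T d = pd a H p * T 1 := by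
  fin_cases a <;> simp_all [Gamma]

lemma sum_Gamma_u' (hv : pd 1 H p = 0) (ha : a ≠ 0) (T : Fin 4 → ℝ) :
    ∑ d, Gamma H p d a 0 * T d = pd a H p * T 1 := by
  simp only [Gamma_comm H p _ a 0, sum_Gamma_u hv ha]

lemma sum_Gamma_eq_zero (ha : a ≠ 0) (hb : b ≠ 0) (T : Fin 4 → ℝ) :
    ∑ d, Gamma H p d a b * T d = 0 := by
  simp [Gamma, ha, hb]

/-- The equations `∇_{(c}K_{ab)} = 0` at `p` written out in coordinates, one for each number of
indices equal to `u`. -/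
structure KillingEquationsAt (H : Pt → ℝ) (K : Pt → Fin 4 → Fin 4 → ℝ) (p : Pt) : Prop where
  uuu : pd 0 (fun q => K q 0 0) p
    = 2 * (pd 0 H p * K p 1 0 + pd 2 H p * K p 2 0 + pd 3 H p * K p 3 0)
  uua : ∀ a ≠ 0, pd a (fun q => K q 0 0) p + 2 * pd 0 (fun q => K q 0 a) p
    = 4 * (pd a H p * K p 1 0)
      + 2 * (pd 0 H p * K p 1 a + pd 2 H p * K p 2 a + pd 3 H p * K p 3 a)
  uab : ∀ a ≠ 0, ∀ b ≠ 0, pd 0 (fun q => K q a b) p + pd a (fun q => K q 0 b) p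
    + pd b (fun q => K q 0 a) p = 2 * (pd a H p * K p 1 b + pd b H p * K p 1 a)
  abc : ∀ a ≠ 0, ∀ b ≠ 0, ∀ c ≠ 0, pd a (fun q => K q b c) p
    + pd b (fun q => K q c a) p + pd c (fun q => K q a b) p = 0

lemma isKillingTensor_of_killingEquationsAt {K : Pt → Fin 4 → Fin 4 → ℝ} (hH : IsPPProfile H U)
    (hsmooth : ∀ a b, ContDiffOn ℝ ∞ (fun p => K p a b) U) (hsymm : ∀ p a b, K p a b = K p b a)
    (heq : ∀ p ∈ U, KillingEquationsAt H K p) :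
    IsKillingTensor H U K := by
  refine ⟨hsmooth, hsymm, fun p hp a b c => ?_⟩
  have hv := hH.pd_v p hp
  have hsum : ∀ a b c, ∑ d, Gamma H p d a b * K p c d = ∑ d, Gamma H p d a b * K p d c :=
    fun a b c => by simp only [hsymm p c]
  have hpd : ∀ a b c, pd a (fun q => K q b c) p = pd a (fun q => K q c b) p :=
    fun a b c => by simp only [hsymm _ b c]
  simp only [covD2, hsum]
  rcases eq_or_ne a 0 with rfl | ha <;> rcases eq_or_ne b 0 with rfl | hb <;>
    rcases eq_or_ne c 0 with rfl | hc
  · rw [sum_Gamma_uu]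
    linarith [(heq p hp).uuu]
  · rw [sum_Gamma_uu, sum_Gamma_u hv hc, sum_Gamma_u' hv hc]
    linarith [(heq p hp).uua c hc, hpd 0 c 0]
  · rw [sum_Gamma_uu, sum_Gamma_u hv hb, sum_Gamma_u' hv hb]
    linarith [(heq p hp).uua b hb, hpd 0 b 0]
  · rw [sum_Gamma_u hv hb, sum_Gamma_u hv hc, sum_Gamma_u' hv hb, sum_Gamma_u' hv hc,
      sum_Gamma_eq_zero hb hc, sum_Gamma_eq_zero hc hb]
    linarith [(heq p hp).uab b hb c hc, hpd b c 0]
  · rw [sum_Gamma_uu, sum_Gamma_u hv ha, sum_Gamma_u' hv ha]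
    linarith [(heq p hp).uua a ha, hpd 0 a 0]
  · rw [sum_Gamma_u hv ha, sum_Gamma_u hv hc, sum_Gamma_u' hv ha, sum_Gamma_u' hv hc,
      sum_Gamma_eq_zero ha hc, sum_Gamma_eq_zero hc ha]
    linarith [(heq p hp).uab a ha c hc, hpd c a 0, hpd 0 c a]
  · rw [sum_Gamma_u hv ha, sum_Gamma_u hv hb, sum_Gamma_u' hv ha, sum_Gamma_u' hv hb,
      sum_Gamma_eq_zero ha hb, sum_Gamma_eq_zero hb ha]
    linarith [(heq p hp).uab a ha b hb, hpd a b 0]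
  · simp only [sum_Gamma_eq_zero ha hb, sum_Gamma_eq_zero hb ha, sum_Gamma_eq_zero ha hc,
      sum_Gamma_eq_zero hc ha, sum_Gamma_eq_zero hb hc, sum_Gamma_eq_zero hc hb]
    linarith [(heq p hp).abc a ha b hb c hc]

variable {X : Pt → Fin 4 → ℝ}

namespace IsKillingVector

lemma pd_u_u (hX : IsKillingVector H U X) (hp : p ∈ U) :
    pd 0 (fun q => X q 0) p = pd 0 H p * X p 1 + pd 2 H p * X p 2 + pd 3 H p * X p 3 := by
  have h := hX.2 p hp 0 0
  rw [covD1, sum_Gamma_uu] at h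
  linarith

lemma pd_u_add_pd_u (hX : IsKillingVector H U X) (hH : IsPPProfile H U) (hp : p ∈ U)
    (ha : a ≠ 0) :
    pd 0 (fun q => X q a) p + pd a (fun q => X q 0) p = 2 * (pd a H p * X p 1) := by
  have h := hX.2 p hp 0 a
  rw [covD1, covD1, sum_Gamma_u (hH.pd_v p hp) ha, sum_Gamma_u' (hH.pd_v p hp) ha] at h
  linarith

lemma pd_add_pd (hX : IsKillingVector H U X) (hp : p ∈ U) (ha : a ≠ 0) (hb : b ≠ 0) :
    pd a (fun q => X q b) p + pd b (fun q => X q a) p = 0 := by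
  have h := hX.2 p hp a b
  rw [covD1, covD1, sum_Gamma_eq_zero ha hb, sum_Gamma_eq_zero hb ha] at h
  linarith

lemma pd_v_v (hX : IsKillingVector H U X) (hp : p ∈ U) : pd 1 (fun q => X q 1) p = 0 := by
  linarith [hX.pd_add_pd hp one_ne_zero one_ne_zero]

lemma differentiableAt (hX : IsKillingVector H U X) (hU : IsOpen U) (hp : p ∈ U) (a : Fin 4) :
    DifferentiableAt ℝ (fun q => X q a) p :=
  differentiableAt_of_contDiffOn hU (hX.1 a) hp

lemma differentiableAt_pd (hX : IsKillingVector H U X) (hU : IsOpen U) (hp : p ∈ U)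
    (a b : Fin 4) : DifferentiableAt ℝ (pd a fun q => X q b) p :=
  _root_.differentiableAt_pd hU (hX.1 b) hp a

lemma pd_pd_add_pd_pd (hX : IsKillingVector H U X) (hU : IsOpen U) (hp : p ∈ U)
    (ha : a ≠ 0) (hb : b ≠ 0) (i : Fin 4) :
    pd i (pd a fun q => X q b) p + pd i (pd b fun q => X q a) p = 0 := by
  rw [← pd_add (hX.differentiableAt_pd hU hp a b) (hX.differentiableAt_pd hU hp b a),
    pd_congr hU (fun q hq => hX.pd_add_pd hq ha hb) i hp, pd_const]

lemma pd_pd_eq_zero (hX : IsKillingVector H U X) (hU : IsOpen U) (hp : p ∈ U)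
    (ha : a ≠ 0) (hb : b ≠ 0) (hc : c ≠ 0) : pd a (pd b fun q => X q c) p = 0 := by
  linarith [hX.pd_pd_add_pd_pd hU hp hb hc a, hX.pd_pd_add_pd_pd hU hp hc ha b,
    hX.pd_pd_add_pd_pd hU hp ha hb c, pd_comm hU (hX.1 a) hp b c, pd_comm hU (hX.1 b) hp c a,
    pd_comm hU (hX.1 c) hp a b]

lemma pd_pd_u_add_pd_pd_u (hX : IsKillingVector H U X) (hH : IsPPProfile H U) (hp : p ∈ U)
    (hb : b ≠ 0) (i : Fin 4) :
    pd i (pd 0 fun q => X q b) p + pd i (pd b fun q => X q 0) p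
      = 2 * (pd b H p * pd i (fun q => X q 1) p + pd i (pd b H) p * X p 1) := by
  have hHb := _root_.differentiableAt_pd hH.isOpen hH.contDiffOn hp b
  have hX1 := hX.differentiableAt hH.isOpen hp 1
  rw [← pd_mul hHb hX1, ← pd_const_mul (hHb.fun_mul hX1), ← pd_add
    (hX.differentiableAt_pd hH.isOpen hp 0 b) (hX.differentiableAt_pd hH.isOpen hp b 0)]
  exact pd_congr hH.isOpen (fun q hq => hX.pd_u_add_pd_u hH hq hb) i hp

lemma pd_u_pd (hX : IsKillingVector H U X) (hH : IsPPProfile H U) (hp : p ∈ U)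
    (ha : a ≠ 0) (hb : b ≠ 0) :
    pd 0 (pd a fun q => X q b) p
      = pd b H p * pd a (fun q => X q 1) p - pd a H p * pd b (fun q => X q 1) p := by
  have hU := hH.isOpen
  have hHab : pd a (pd b H) p * X p 1 = pd b (pd a H) p * X p 1 := by
    rw [pd_comm hU hH.contDiffOn hp]
  linarith [hX.pd_pd_u_add_pd_pd_u hH hp hb a, hX.pd_pd_u_add_pd_pd_u hH hp ha b,
    hX.pd_pd_add_pd_pd hU hp ha hb 0, pd_comm hU (hX.1 0) hp a b, pd_comm hU (hX.1 a) hp 0 b,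
    pd_comm hU (hX.1 b) hp 0 a]

lemma pd_pd_u_u (hX : IsKillingVector H U X) (hH : IsPPProfile H U) (hp : p ∈ U) (i : Fin 4) :
    pd i (pd 0 fun q => X q 0) p
      = pd 0 H p * pd i (fun q => X q 1) p + pd i (pd 0 H) p * X p 1
        + (pd 2 H p * pd i (fun q => X q 2) p + pd i (pd 2 H) p * X p 2)
        + (pd 3 H p * pd i (fun q => X q 3) p + pd i (pd 3 H) p * X p 3) := by
  have hdH := _root_.differentiableAt_pd hH.isOpen hH.contDiffOn hp
  have hdX := hX.differentiableAt hH.isOpen hp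
  rw [pd_congr hH.isOpen (fun q hq => hX.pd_u_u hq) i hp,
    pd_add (((hdH 0).fun_mul (hdX 1)).fun_add ((hdH 2).fun_mul (hdX 2))) ((hdH 3).fun_mul (hdX 3)),
    pd_add ((hdH 0).fun_mul (hdX 1)) ((hdH 2).fun_mul (hdX 2)),
    pd_mul (hdH 0) (hdX 1), pd_mul (hdH 2) (hdX 2), pd_mul (hdH 3) (hdX 3)]

lemma pd_u_pd_u_v (hX : IsKillingVector H U X) (hH : IsPPProfile H U) (hp : p ∈ U) :
    pd 0 (pd 0 fun q => X q 1) p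
      = pd 2 H p * pd 2 (fun q => X q 1) p + pd 3 H p * pd 3 (fun q => X q 1) p := by
  have h1 : pd 0 (pd 0 fun q => X q 1) p = -pd 1 (pd 0 fun q => X q 0) p := by
    have h := hX.pd_pd_u_add_pd_pd_u hH hp one_ne_zero 0
    rw [hH.pd_v p hp, hH.pd_pd_v hp, pd_comm hH.isOpen (hX.1 0) hp 0 1] at h
    linarith
  have h2 : pd 1 (fun q => X q 2) p = -pd 2 (fun q => X q 1) p := by
    linarith [hX.pd_add_pd hp one_ne_zero (by decide : (2 : Fin 4) ≠ 0)]
  have h3 : pd 1 (fun q => X q 3) p = -pd 3 (fun q => X q 1) p := by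
    linarith [hX.pd_add_pd hp one_ne_zero (by decide : (3 : Fin 4) ≠ 0)]
  rw [h1, hX.pd_pd_u_u hH hp, hH.pd_v_pd hp, hH.pd_v_pd hp, hH.pd_v_pd hp, hX.pd_v_v hp, h2, h3]
  ring

lemma hessian_mul_gradient_v (hX : IsKillingVector H U X) (hH : IsPPProfile H U) (hp : p ∈ U)
    (ha : a ≠ 0) :
    pd a (pd 2 H) p * pd 2 (fun q => X q 1) p + pd a (pd 3 H) p * pd 3 (fun q => X q 1) p = 0 := by
  have hU := hH.isOpen
  have hdH := _root_.differentiableAt_pd hU hH.contDiffOn hp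
  have hdX := fun i => hX.differentiableAt_pd hU hp i 1
  have hlhs : pd a (pd 0 (pd 0 fun q => X q 1)) p = 0 := by
    have hua : Set.EqOn (pd a (pd 0 fun q => X q 1)) (fun _ => 0) U := fun q hq => by
      rw [pd_comm hU (hX.1 1) hq, hX.pd_u_pd hH hq ha one_ne_zero, hH.pd_v q hq, hX.pd_v_v hq]
      ring
    rw [pd_comm hU (contDiffOn_pd hU (hX.1 1) 0) hp, pd_congr hU hua 0 hp, pd_const]
  rw [pd_congr hU (fun q hq => hX.pd_u_pd_u_v hH hq) a hp,
    pd_add ((hdH 2).fun_mul (hdX 2)) ((hdH 3).fun_mul (hdX 3)), pd_mul (hdH 2) (hdX 2),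
    pd_mul (hdH 3) (hdX 3), hX.pd_pd_eq_zero hU hp ha (by decide) one_ne_zero,
    hX.pd_pd_eq_zero hU hp ha (by decide) one_ne_zero] at hlhs
  linarith

lemma pd_component_v_eq_zero (hX : IsKillingVector H U X) (hH : IsPPProfile H U) (hp : p ∈ U)
    (hdet : HasNondegenerateHessian H p) (ha : a ≠ 0) :
    pd a (fun q => X q 1) p = 0 := by
  have h2 := hX.hessian_mul_gradient_v hH hp (by decide : (2 : Fin 4) ≠ 0)
  have h3 := hX.hessian_mul_gradient_v hH hp (by decide : (3 : Fin 4) ≠ 0)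
  rw [pd_comm hH.isOpen hH.contDiffOn hp 3 2] at h3
  have hdet' := sub_ne_zero.2 hdet
  have hy : pd 2 (fun q => X q 1) p = 0 := mul_left_cancel₀ hdet' <| by
    linear_combination pd 3 (pd 3 H) p * h2 - pd 2 (pd 3 H) p * h3
  have hz : pd 3 (fun q => X q 1) p = 0 := mul_left_cancel₀ hdet' <| by
    linear_combination pd 2 (pd 2 H) p * h3 - pd 2 (pd 3 H) p * h2
  fin_cases a
  exacts [absurd rfl ha, hX.pd_v_v hp, hy, hz]

lemma pd_v_eq_zero (hX : IsKillingVector H U X) (hH : IsPPProfile H U) (hp : p ∈ U)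
    (hdet : HasNondegenerateHessian H p) (ha : a ≠ 0) : pd 1 (fun q => X q a) p = 0 := by
  linarith [hX.pd_add_pd hp one_ne_zero ha, hX.pd_component_v_eq_zero hH hp hdet ha]

lemma pd_u_pd_eq_zero (hX : IsKillingVector H U X) (hH : IsPPProfile H U) (hp : p ∈ U)
    (hdet : HasNondegenerateHessian H p) (ha : a ≠ 0) (hb : b ≠ 0) :
    pd 0 (pd a fun q => X q b) p = 0 := by
  rw [hX.pd_u_pd hH hp ha hb, hX.pd_component_v_eq_zero hH hp hdet ha,
    hX.pd_component_v_eq_zero hH hp hdet hb]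
  ring

lemma pd_u_pd_u_of_isStationary (hX : IsKillingVector H U X) (hH : IsPPProfile H U) (hp : p ∈ U)
    (hst : ∀ i, pd i H p = 0) (ha : a ≠ 0) (hu : pd 0 (pd a H) p = 0) :
    pd 0 (pd 0 fun q => X q a) p = -(pd a (pd 2 H) p * X p 2 + pd a (pd 3 H) p * X p 3) := by
  have h := hX.pd_pd_u_add_pd_pd_u hH hp ha 0
  rw [pd_comm hH.isOpen (hX.1 0) hp 0 a, hX.pd_pd_u_u hH hp,
    pd_comm hH.isOpen hH.contDiffOn hp a 0, hu, hst, hst, hst, hst] at h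
  linarith

end IsKillingVector

end KillingEquations

section Reducibility

variable {H : Pt → ℝ} {U : Set Pt} {K : Pt → Fin 4 → Fin 4 → ℝ} {p : Pt} {a b : Fin 4}

lemma ppMetric_eq_of_ne_zero (H₁ H₂ : Pt → ℝ) (p₁ p₂ : Pt) (ha : a ≠ 0) :
    ppMetric H₁ p₁ a b = ppMetric H₂ p₂ a b := by
  simp [ppMetric, ha]

lemma IsReducible.component_induction (hK : IsReducible H U K) {P : (Pt → ℝ) → Prop}
    (a b : Fin 4)
    (congr : ∀ f g, Set.EqOn f g U → P f → P g)
    (metric : P fun q => ppMetric H q a b)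
    (prod : ∀ X Y, IsKillingVector H U X → IsKillingVector H U Y → P fun q => X q a * Y q b)
    (add : ∀ f g, P f → P g → P fun q => f q + g q)
    (smul : ∀ (c : ℝ) f, P f → P fun q => c * f q) :
    P fun q => K q a b := by
  obtain ⟨c₀, n, c, X, Y, hX, hY, hKXY⟩ := hK
  have hprod : ∀ i, P fun q => c i * ((X i q a * Y i q b + X i q b * Y i q a) / 2) := fun i => by
    convert smul (c i / 2) _ (add _ _ (prod _ _ (hX i) (hY i)) (prod _ _ (hY i) (hX i))) using 2
    ring
  have hsum := Finset.sum_induction _ P add (by simpa [Pi.zero_def] using smul 0 _ metric)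
    (s := Finset.univ) fun i _ => hprod i
  simp only [Finset.sum_fn] at hsum
  exact congr _ _ (fun q hq => (hKXY q hq a b).symm) (add _ _ (smul c₀ _ metric) hsum)

lemma IsReducible.pd_v_eq_zero (hK : IsReducible H U K) (hH : IsPPProfile H U) (hp : p ∈ U)
    (hdet : HasNondegenerateHessian H p) (ha : a ≠ 0) (hb : b ≠ 0) :
    pd 1 (fun q => K q a b) p = 0 := by
  have hU := hH.isOpen
  suffices h : ContDiffOn ℝ ∞ (fun q => K q a b) U ∧ pd 1 (fun q => K q a b) p = 0 from h.2
  refine hK.component_induction (P := fun f => ContDiffOn ℝ ∞ f U ∧ pd 1 f p = 0) a b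
    ?congr ?metric ?prod ?add ?smul
  case congr =>
    exact fun f g hfg hf => ⟨hf.1.congr hfg.symm, pd_congr hU hfg 1 hp ▸ hf.2⟩
  case metric =>
    simp only [ppMetric_eq_of_ne_zero H 0 _ 0 ha]
    exact ⟨contDiffOn_const, pd_const ..⟩
  case prod =>
    refine fun X Y hX hY => ⟨(hX.1 a).mul (hY.1 b), ?_⟩
    rw [pd_mul (hX.differentiableAt hU hp a) (hY.differentiableAt hU hp b),
      hX.pd_v_eq_zero hH hp hdet ha, hY.pd_v_eq_zero hH hp hdet hb]
    ring
  case add =>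
    refine fun f g hf hg => ⟨hf.1.add hg.1, ?_⟩
    rw [pd_add (differentiableAt_of_contDiffOn hU hf.1 hp)
      (differentiableAt_of_contDiffOn hU hg.1 hp), hf.2, hg.2, add_zero]
  case smul =>
    refine fun c f hf => ⟨contDiffOn_const.mul hf.1, ?_⟩
    rw [pd_const_mul (differentiableAt_of_contDiffOn hU hf.1 hp), hf.2, mul_zero]

lemma pd_pd_mul_component {X Y : Pt → Fin 4 → ℝ} (hX : IsKillingVector H U X)
    (hY : IsKillingVector H U Y) (hH : IsPPProfile H U)
    (hdet : ∀ q ∈ U, HasNondegenerateHessian H q) (ha : a ≠ 0) (hb : b ≠ 0) :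
    Set.EqOn (pd 0 (pd a fun q => X q b * Y q b))
      (fun q => pd 0 (fun q => X q b) q * pd a (fun q => Y q b) q
        + pd a (fun q => X q b) q * pd 0 (fun q => Y q b) q) U := fun q hq => by
  have hU := hH.isOpen
  have hdX := fun r hr => hX.differentiableAt (p := r) hU hr b
  have hdY := fun r hr => hY.differentiableAt (p := r) hU hr b
  have hdX' := hX.differentiableAt_pd hU hq a b
  have hdY' := hY.differentiableAt_pd hU hq a b
  rw [pd_congr hU (fun r hr => pd_mul (hdX r hr) (hdY r hr) a) 0 hq,
    pd_add ((hdX q hq).fun_mul hdY') (hdX'.fun_mul (hdY q hq)), pd_mul (hdX q hq) hdY',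
    pd_mul hdX' (hdY q hq), hX.pd_u_pd_eq_zero hH hq (hdet q hq) ha hb,
    hY.pd_u_pd_eq_zero hH hq (hdet q hq) ha hb]
  ring

lemma pd_pd_pd_mul_component {X Y : Pt → Fin 4 → ℝ} (hX : IsKillingVector H U X)
    (hY : IsKillingVector H U Y) (hH : IsPPProfile H U)
    (hdet : ∀ q ∈ U, HasNondegenerateHessian H q) (hp : p ∈ U)
    (ha : a ≠ 0) (hb : b ≠ 0) {k : ℝ}
    (hk : ∀ Z, IsKillingVector H U Z → pd 0 (pd 0 fun q => Z q b) p = k * Z p b) :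
    pd 0 (pd 0 (pd a fun q => X q b * Y q b)) p = k * pd a (fun q => X q b * Y q b) p := by
  have hU := hH.isOpen
  have hdX := fun i => hX.differentiableAt_pd hU hp i b
  have hdY := fun i => hY.differentiableAt_pd hU hp i b
  rw [pd_congr hU (pd_pd_mul_component hX hY hH hdet ha hb) 0 hp,
    pd_add ((hdX 0).fun_mul (hdY a)) ((hdX a).fun_mul (hdY 0)), pd_mul (hdX 0) (hdY a),
    pd_mul (hdX a) (hdY 0), hk X hX, hk Y hY, hX.pd_u_pd_eq_zero hH hp (hdet p hp) ha hb,
    hY.pd_u_pd_eq_zero hH hp (hdet p hp) ha hb,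
    pd_mul (hX.differentiableAt hU hp b) (hY.differentiableAt hU hp b)]
  ring

lemma IsReducible.pd_pd_pd_eq_mul (hK : IsReducible H U K) (hH : IsPPProfile H U)
    (hdet : ∀ q ∈ U, HasNondegenerateHessian H q) (hp : p ∈ U) (ha : a ≠ 0) (hb : b ≠ 0) {k : ℝ}
    (hk : ∀ X, IsKillingVector H U X → pd 0 (pd 0 fun q => X q b) p = k * X p b) :
    pd 0 (pd 0 (pd a fun q => K q b b)) p = k * pd a (fun q => K q b b) p := by
  have hU := hH.isOpen
  suffices h : ContDiffOn ℝ ∞ (fun q => K q b b) U ∧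
    pd 0 (pd 0 (pd a fun q => K q b b)) p = k * pd a (fun q => K q b b) p from h.2
  refine hK.component_induction
    (P := fun f => ContDiffOn ℝ ∞ f U ∧ pd 0 (pd 0 (pd a f)) p = k * pd a f p) b b
    ?congr ?metric ?prod ?add ?smul
  case congr =>
    intro f g hfg hf
    have ha := pd_congr hU hfg a
    exact ⟨hf.1.congr hfg.symm, pd_congr hU (pd_congr hU ha 0) 0 hp ▸ ha hp ▸ hf.2⟩
  case metric =>
    simp only [ppMetric_eq_of_ne_zero H 0 _ 0 hb]
    refine ⟨contDiffOn_const, ?_⟩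
    simp only [funext (pd_const _ _), pd_const, mul_zero]
  case prod =>
    exact fun X Y hX hY =>
      ⟨(hX.1 b).mul (hY.1 b), pd_pd_pd_mul_component hX hY hH hdet hp ha hb hk⟩
  case add =>
    refine fun f g hf hg => ⟨hf.1.add hg.1, ?_⟩
    rw [pd_pd_pd_add hU hf.1 hg.1 hp, hf.2, hg.2, pd_add (differentiableAt_of_contDiffOn hU hf.1 hp)
      (differentiableAt_of_contDiffOn hU hg.1 hp)]
    ring
  case smul =>
    refine fun c f hf => ⟨contDiffOn_const.mul hf.1, ?_⟩
    rw [pd_pd_pd_const_mul hU hf.1 hp, hf.2,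
      pd_const_mul (differentiableAt_of_contDiffOn hU hf.1 hp)]
    ring

end Reducibility

section Swap

variable {H : Pt → ℝ} {U : Set Pt}

/-- The linear symmetry of `ℝ⁴` interchanging the coordinates `y` and `z`; `swp` is its action on
indices. -/
def swapPt : Pt ≃L[ℝ] Pt :=
  (LinearEquiv.funCongrLeft ℝ ℝ (Equiv.swap (2 : Fin 4) 3)).toContinuousLinearEquiv

lemma swapPt_apply (p : Pt) (i : Fin 4) : swapPt p i = p (swp i) := rfl

lemma swp_swp (i : Fin 4) : swp (swp i) = i := Equiv.swap_apply_self 2 3 i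

lemma swapPt_single (i : Fin 4) : swapPt (Pi.single i 1) = Pi.single (swp i) 1 := by
  ext j
  simp only [swapPt_apply, Pi.single_apply]
  exact if_congr ⟨fun h => by rw [← h, swp_swp], fun h => by rw [h, swp_swp]⟩ rfl rfl

lemma pd_comp_swapPt (f : Pt → ℝ) (i : Fin 4) (p : Pt) :
    pd i (fun q => f (swapPt q)) p = pd (swp i) f (swapPt p) := by
  rw [pd, pd, ← swapPt_single]
  exact congrArg (· (Pi.single i 1)) (swapPt.comp_right_fderiv (f := f) (x := p))

lemma pd_swp_swapPt (hH : ∀ p, H (swapPt p) = H p) (i : Fin 4) (p : Pt) :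
    pd (swp i) H (swapPt p) = pd i H p := by
  rw [← pd_comp_swapPt, funext hH]

lemma Gamma_swapPt (hH : ∀ p, H (swapPt p) = H p) (p : Pt) (d a b : Fin 4) :
    Gamma H (swapPt p) (swp d) (swp a) (swp b) = Gamma H p d a b := by
  simp only [Gamma, ← pd_swp_swapPt hH _ p]
  fin_cases d <;> fin_cases a <;> fin_cases b <;> rfl

lemma sum_Gamma_swapPt (hH : ∀ p, H (swapPt p) = H p) (p : Pt) (a b : Fin 4) (T : Fin 4 → ℝ) :
    ∑ d, Gamma H p d a b * T (swp d) = ∑ d, Gamma H (swapPt p) d (swp a) (swp b) * T d := by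
  rw [← Equiv.sum_comp (Equiv.swap (2 : Fin 4) 3) fun d =>
    Gamma H (swapPt p) d (swp a) (swp b) * T d]
  exact Finset.sum_congr rfl fun d _ => congrArg (· * T (swp d)) (Gamma_swapPt hH p d a b).symm

lemma ppMetric_swapPt (hH : ∀ p, H (swapPt p) = H p) (p : Pt) (a b : Fin 4) :
    ppMetric H (swapPt p) (swp a) (swp b) = ppMetric H p a b := by
  simp only [ppMetric, hH]
  fin_cases a <;> fin_cases b <;> rfl

lemma contDiffOn_comp_swapPt (hU : Set.MapsTo swapPt U U) {f : Pt → ℝ}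
    (hf : ContDiffOn ℝ ∞ f U) : ContDiffOn ℝ ∞ (fun p => f (swapPt p)) U :=
  hf.comp swapPt.contDiff.contDiffOn hU

lemma isKillingVector_swap (hH : ∀ p, H (swapPt p) = H p) (hU : Set.MapsTo swapPt U U)
    {X : Pt → Fin 4 → ℝ} (hX : IsKillingVector H U X) :
    IsKillingVector H U fun p a => X (swapPt p) (swp a) := by
  have hcov : ∀ p a b, covD1 H (fun p a => X (swapPt p) (swp a)) p a b
      = covD1 H X (swapPt p) (swp a) (swp b) := fun p a b => by
    rw [covD1, covD1, pd_comp_swapPt (fun q => X q (swp b)), sum_Gamma_swapPt hH]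
  refine ⟨fun a => contDiffOn_comp_swapPt hU (hX.1 (swp a)), fun p hp a b => ?_⟩
  rw [hcov, hcov]
  exact hX.2 _ (hU hp) _ _

lemma isKillingTensor_swapYZ (hH : ∀ p, H (swapPt p) = H p) (hU : Set.MapsTo swapPt U U)
    {K : Pt → Fin 4 → Fin 4 → ℝ} (hK : IsKillingTensor H U K) :
    IsKillingTensor H U (swapYZ K) := by
  have hcov : ∀ p c a b, covD2 H (swapYZ K) p c a b
      = covD2 H K (swapPt p) (swp c) (swp a) (swp b) := fun p c a b => by
    rw [covD2, covD2, ← pd_comp_swapPt (fun q => K q (swp a) (swp b)),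
      ← sum_Gamma_swapPt hH p c a fun d => K (swapPt p) d (swp b),
      ← sum_Gamma_swapPt hH p c b (K (swapPt p) (swp a))]
    rfl
  refine ⟨fun a b => contDiffOn_comp_swapPt hU (hK.1 (swp a) (swp b)),
    fun p a b => hK.2.1 _ _ _, fun p hp a b c => ?_⟩
  rw [hcov, hcov, hcov]
  exact hK.2.2 _ (hU hp) _ _ _

lemma isReducible_swapYZ (hH : ∀ p, H (swapPt p) = H p) (hU : Set.MapsTo swapPt U U)
    {K : Pt → Fin 4 → Fin 4 → ℝ} (hK : IsReducible H U K) : IsReducible H U (swapYZ K) := by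
  obtain ⟨c₀, n, c, X, Y, hX, hY, hKXY⟩ := hK
  refine ⟨c₀, n, c, fun i p a => X i (swapPt p) (swp a), fun i p a => Y i (swapPt p) (swp a),
    fun i => isKillingVector_swap hH hU (hX i), fun i => isKillingVector_swap hH hU (hY i),
    fun p hp a b => ?_⟩
  rw [← ppMetric_swapPt hH]
  exact hKXY _ (hU hp) _ _

lemma swapYZ_swapYZ (K : Pt → Fin 4 → Fin 4 → ℝ) : swapYZ (swapYZ K) = K := by
  funext p a b
  simp only [swapYZ, swp_swp]

lemma not_isReducible_swapYZ (hH : ∀ p, H (swapPt p) = H p) (hU : Set.MapsTo swapPt U U)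
    {K : Pt → Fin 4 → Fin 4 → ℝ} (hK : ¬IsReducible H U K) : ¬IsReducible H U (swapYZ K) :=
  fun h => hK (swapYZ_swapYZ K ▸ isReducible_swapYZ hH hU h)

end Swap

section PlaneWave

variable {I : Set ℝ} {A : ℝ → ℝ} {p : Pt}

/-- The part of `ℝ⁴` over the set `I` of values of `u`. -/
def slab (I : Set ℝ) : Set Pt := {p | p 0 ∈ I}

/-- The function `H` of the conformally flat plane wave `2H = A(u)(y² + z²)`. -/
def planeWave (A : ℝ → ℝ) (p : Pt) : ℝ := A (p 0) * (p 2 ^ 2 + p 3 ^ 2) / 2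

lemma mapsTo_swapPt_slab (I : Set ℝ) : Set.MapsTo swapPt (slab I) (slab I) := fun _ hp => hp

lemma planeWave_swapPt (A : ℝ → ℝ) (p : Pt) : planeWave A (swapPt p) = planeWave A p := by
  simp only [planeWave, swapPt_apply, swp]
  simp [add_comm, Equiv.swap_apply_of_ne_of_ne]

lemma isOpen_slab (hI : IsOpen I) : IsOpen (slab I) := hI.preimage (continuous_apply 0)

lemma contDiffOn_deriv (hI : IsOpen I) {s : ℝ → ℝ} (hs : ContDiffOn ℝ ∞ s I) :
    ContDiffOn ℝ ∞ (deriv s) I :=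
  ((contDiffOn_infty_iff_deriv_of_isOpen hI).1 hs).2

lemma differentiableAt_of_mem {s : ℝ → ℝ} (hI : IsOpen I) (hs : ContDiffOn ℝ ∞ s I)
    (hp : p ∈ slab I) : DifferentiableAt ℝ s (p 0) :=
  (hs.contDiffAt (hI.mem_nhds hp)).differentiableAt (by simp)

lemma pd_planeWave (hA : DifferentiableAt ℝ A (p 0)) (i : Fin 4) :
    pd i (planeWave A) p = kd 0 i * deriv A (p 0) * (p 2 ^ 2 + p 3 ^ 2) / 2
      + A (p 0) * (kd 2 i * p 2 + kd 3 i * p 3) := by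
  have hA' : DifferentiableAt ℝ (fun q : Pt => A (q 0)) p := hA.comp p (differentiableAt_apply 0 p)
  have hpd := pd_comp_u hA i
  unfold planeWave
  simp (disch := first | assumption | fun_prop | simp) only [pd_mul, pd_div, pd_add, pd_pow,
    pd_coord, pd_const, hpd]
  ring

lemma isPPProfile_planeWave (hI : IsOpen I) (hA : ContDiffOn ℝ ∞ A I) :
    IsPPProfile (planeWave A) (slab I) where
  isOpen := isOpen_slab hI
  contDiffOn := by
    intro p hp
    have hAp := hA.contDiffAt (hI.mem_nhds hp)
    refine ContDiffAt.contDiffWithinAt ?_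
    unfold planeWave
    fun_prop
  pd_v p hp := by
    rw [pd_planeWave (differentiableAt_of_mem hI hA hp)]
    simp [kd]

lemma pd_pd_planeWave (hI : IsOpen I) (hA : ContDiffOn ℝ ∞ A I) (hp : p ∈ slab I) {a : Fin 4}
    (ha : a = 2 ∨ a = 3) (i : Fin 4) :
    pd i (pd a (planeWave A)) p = kd 0 i * deriv A (p 0) * p a + A (p 0) * kd a i := by
  have hpd : Set.EqOn (pd a (planeWave A)) (fun q => A (q 0) * q a) (slab I) := fun q hq => by
    rw [pd_planeWave (differentiableAt_of_mem hI hA hq)]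
    rcases ha with rfl | rfl <;> simp [kd]
  have hAp := differentiableAt_of_mem hI hA hp
  rw [pd_congr (isOpen_slab hI) hpd i hp,
    pd_mul (by fun_prop) (by fun_prop), pd_coord,
    pd_comp_u hAp, add_comm]

lemma hasNondegenerateHessian_planeWave (hI : IsOpen I) (hA : ContDiffOn ℝ ∞ A I)
    (hp : p ∈ slab I) (hA0 : A (p 0) ≠ 0) : HasNondegenerateHessian (planeWave A) p := by
  rw [HasNondegenerateHessian]
  simp [pd_pd_planeWave hI hA hp, kd, hA0]

lemma pd_u_pd_u_component_planeWave (hI : IsOpen I) (hA : ContDiffOn ℝ ∞ A I) (hp : p ∈ slab I)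
    (hy : p 2 = 0) (hz : p 3 = 0) {X : Pt → Fin 4 → ℝ}
    (hX : IsKillingVector (planeWave A) (slab I) X) {a : Fin 4} (ha : a = 2 ∨ a = 3) :
    pd 0 (pd 0 fun q => X q a) p = -A (p 0) * X p a := by
  have hst : ∀ i, pd i (planeWave A) p = 0 := fun i => by
    rw [pd_planeWave (differentiableAt_of_mem hI hA hp), hy, hz]
    ring
  have hpd := fun i => pd_pd_planeWave hI hA hp (a := i)
  rw [hX.pd_u_pd_u_of_isStationary (isPPProfile_planeWave hI hA) hp hst (by grind)
    (by rcases ha with rfl | rfl <;> simp [hpd, hy, hz, kd])]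
  rcases ha with rfl | rfl <;> simp [hpd, kd]

end PlaneWave

section KTeight

variable {I : Set ℝ} {A s : ℝ → ℝ}

lemma isKillingTensor_KTeight (hI : IsOpen I) (hA : ContDiffOn ℝ ∞ A I) (hs : ContDiffOn ℝ ∞ s I)
    (hode : ∀ u ∈ I, deriv (deriv s) u = -A u * s u)
    (hcompat : ∀ u ∈ I, deriv (deriv A) u * s u + 4 * deriv A u * deriv s u = 0) :
    IsKillingTensor (planeWave A) (slab I) (KTeight A s) := by
  have hA' := contDiffOn_deriv hI hA
  have hs' := contDiffOn_deriv hI hs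
  refine isKillingTensor_of_killingEquationsAt (isPPProfile_planeWave hI hA)
    (fun a b p hp => ?smooth) (fun p a b => ?symm) fun p hp => ?killing
  case smooth =>
    have hAp := hA.contDiffAt (hI.mem_nhds hp)
    have hsp := hs.contDiffAt (hI.mem_nhds hp)
    have hA'p := hA'.contDiffAt (hI.mem_nhds hp)
    have hs'p := hs'.contDiffAt (hI.mem_nhds hp)
    refine ContDiffAt.contDiffWithinAt ?_
    unfold KTeight
    fun_prop
  case symm => simp only [KTeight, sd_comm _ _ a b]
  case killing =>
    have hAp := differentiableAt_of_mem hI hA hp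
    have hsp := differentiableAt_of_mem hI hs hp
    have hA'p := differentiableAt_of_mem hI hA' hp
    have hs'p := differentiableAt_of_mem hI hs' hp
    -- With the indices left symbolic, each equation is a polynomial identity in Kronecker deltas.
    refine ⟨?uuu, fun a ha => ?uua, fun a ha b hb => ?uab, fun a ha b hb c hc => ?abc⟩
    all_goals
      simp (disch := first | assumption | decide | fun_prop) only [KTeight, sd, kd_self, kd_of_ne,
        kd_zero_of_ne, mul_zero, zero_mul, mul_one, one_mul, add_zero, zero_add, sub_zero,
        zero_sub, zero_div, pd_mul, pd_neg, pd_add, pd_sub, pd_pow, pd_coord, pd_const,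
        pd_comp_u hAp, pd_comp_u hsp, pd_comp_u hA'p, pd_comp_u hs'p, pd_planeWave, hode _ hp]
    case uuu => linear_combination (-1 / 3 * p 2 * (p 2 ^ 2 + p 3 ^ 2)) * hcompat _ hp
    all_goals ring

lemma KTeight_zz (A s : ℝ → ℝ) (p : Pt) : KTeight A s p 3 3 = 2 / 3 * (deriv s (p 0) * p 2) := by
  simp (disch := decide) only [KTeight, sd, kd_self, kd_of_ne]
  ring

lemma pd_y_KTeight_zz (hI : IsOpen I) (hs : ContDiffOn ℝ ∞ s I) :
    Set.EqOn (pd 2 fun q => KTeight A s q 3 3) (fun q => 2 / 3 * deriv s (q 0)) (slab I) :=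
  fun q hq => by
    have hs' := differentiableAt_of_mem hI (contDiffOn_deriv hI hs) hq
    simp (disch := first | assumption | decide | fun_prop) only [KTeight_zz, pd_const_mul, pd_mul,
      pd_coord, pd_comp_u hs', kd_of_ne, kd_self]
    ring

lemma pd_u_pd_y_KTeight_zz (hI : IsOpen I) (hs : ContDiffOn ℝ ∞ s I)
    (hode : ∀ u ∈ I, deriv (deriv s) u = -A u * s u) :
    Set.EqOn (pd 0 (pd 2 fun q => KTeight A s q 3 3)) (fun q => -(2 / 3) * (A (q 0) * s (q 0)))
      (slab I) := fun q hq => by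
  have hs' := differentiableAt_of_mem hI (contDiffOn_deriv hI hs) hq
  rw [pd_congr (isOpen_slab hI) (pd_y_KTeight_zz hI hs) 0 hq, pd_const_mul (by fun_prop),
    pd_comp_u hs', hode _ hq, kd_self]
  ring

lemma not_isReducible_KTeight (hI : IsOpen I) (hA : ContDiffOn ℝ ∞ A I) (hs : ContDiffOn ℝ ∞ s I)
    (hA0 : ∀ u ∈ I, A u ≠ 0) (hode : ∀ u ∈ I, deriv (deriv s) u = -A u * s u) {u₀ : ℝ}
    (hu₀ : u₀ ∈ I) (hne : deriv A u₀ * s u₀ ≠ 0) :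
    ¬IsReducible (planeWave A) (slab I) (KTeight A s) := fun hK => by
  set p : Pt := Pi.single 0 u₀ with hpdef
  have hp0 : p 0 = u₀ := by simp [hpdef]
  have hp : p ∈ slab I := by simpa [slab, hp0] using hu₀
  have hAp := differentiableAt_of_mem hI hA hp
  have hsp := differentiableAt_of_mem hI hs hp
  have hoscillator := hK.pd_pd_pd_eq_mul (isPPProfile_planeWave hI hA)
    (fun q hq => hasNondegenerateHessian_planeWave hI hA hq (hA0 _ hq)) hp
    (by decide : (2 : Fin 4) ≠ 0) (by decide : (3 : Fin 4) ≠ 0)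
    fun X hX => pd_u_pd_u_component_planeWave hI hA hp (by simp [hpdef]) (by simp [hpdef]) hX
      (Or.inr rfl)
  rw [pd_congr (isOpen_slab hI) (pd_u_pd_y_KTeight_zz hI hs hode) 0 hp, pd_y_KTeight_zz hI hs hp,
    pd_const_mul (by fun_prop), pd_mul (by fun_prop) (by fun_prop), pd_comp_u hAp, pd_comp_u hsp,
    kd_self] at hoscillator
  simp only [hp0] at hoscillator
  exact hne (by linear_combination (-3 / 2) * hoscillator)

end KTeight

section KTone

variable {I : Set ℝ} {A : ℝ → ℝ}

lemma isKillingTensor_KTone (hI : IsOpen I) (hA : ContDiffOn ℝ ∞ A I) (hpos : ∀ u ∈ I, 0 < A u)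
    (hode : ∀ u ∈ I, A u * deriv (deriv A) u = 5 / 4 * deriv A u ^ 2 + 16 / 3 * A u ^ 3) :
    IsKillingTensor (planeWave A) (slab I) (KTone A) := by
  have hA' := contDiffOn_deriv hI hA
  refine isKillingTensor_of_killingEquationsAt (isPPProfile_planeWave hI hA)
    (fun a b p hp => ?smooth) (fun p a b => ?symm) fun p hp => ?killing
  case smooth =>
    have hA0 := (hpos _ hp).ne'
    have hAp := hA.contDiffAt (hI.mem_nhds hp)
    have hA'p := hA'.contDiffAt (hI.mem_nhds hp)
    refine ContDiffAt.contDiffWithinAt ?_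
    unfold KTone
    fun_prop (disch := assumption)
  case symm => simp only [KTone, sd_comm _ _ a b]
  case killing =>
    have hAp := differentiableAt_of_mem hI hA hp
    have hA'p := differentiableAt_of_mem hI hA' hp
    have hA0 : 0 < A (p 0) := hpos _ hp
    have hne := hA0.ne'
    have h34 : A (p 0) ^ ((3 : ℝ) / 4) = A (p 0) * A (p 0) ^ (-(1 : ℝ) / 4) := by
      rw [← Real.rpow_one_add' hA0.le (by norm_num)]
      norm_num
    have h54 : A (p 0) ^ (-(5 : ℝ) / 4) = A (p 0) ^ (-(1 : ℝ) / 4) / A (p 0) := by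
      rw [← Real.rpow_sub_one hne]
      norm_num
    have hA'' : deriv (deriv A) (p 0)
        = 5 / 4 * deriv A (p 0) ^ 2 / A (p 0) + 16 / 3 * A (p 0) ^ 2 := by
      field_simp
      linear_combination 12 * hode _ hp
    refine ⟨?uuu, fun a ha => ?uua, fun a ha b hb => ?uab, fun a ha b hb c hc => ?abc⟩
    all_goals
      simp (disch := first | assumption | decide | fun_prop (disch := assumption)) only [KTone, sd,
        kd_self, kd_of_ne, kd_zero_of_ne, mul_zero, zero_mul, mul_one, one_mul, add_zero, zero_add,
        sub_zero, zero_div, pd_mul, pd_neg, pd_add, pd_sub, pd_pow, pd_coord, pd_const,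
        pd_rpow_const, pd_comp_u hAp, pd_comp_u hA'p, pd_planeWave, h34, h54, hA'']
    case abc => ring
    all_goals field

lemma KTone_yz (A : ℝ → ℝ) (p : Pt) : KTone A p 2 3 = -2 * (A (p 0) ^ (-(1 : ℝ) / 4) * p 1) := by
  simp (disch := decide) only [KTone, sd, kd_self, kd_of_ne]
  ring

lemma not_isReducible_KTone (hI : IsOpen I) (hA : ContDiffOn ℝ ∞ A I) (hpos : ∀ u ∈ I, 0 < A u)
    (hne : I.Nonempty) : ¬IsReducible (planeWave A) (slab I) (KTone A) := fun hK => by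
  obtain ⟨u, hu⟩ := hne
  have hp : (Pi.single 0 u : Pt) ∈ slab I := by simpa [slab] using hu
  have hA0 := hpos _ hp
  have hA0' := hA0.ne'
  have hv := hK.pd_v_eq_zero (isPPProfile_planeWave hI hA) hp
    (hasNondegenerateHessian_planeWave hI hA hp hA0') (by decide : (2 : Fin 4) ≠ 0)
    (by decide : (3 : Fin 4) ≠ 0)
  have hAp := differentiableAt_of_mem hI hA hp
  simp (disch := first | assumption | decide | fun_prop (disch := assumption)) only [KTone_yz,
    pd_const_mul, pd_mul, pd_rpow_const, pd_comp_u hAp, pd_coord, kd_self, kd_of_ne] at hv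
  linarith [Real.rpow_pos_of_pos hA0 (-(1 : ℝ) / 4)]

end KTone

section InverseSquare

lemma deriv_const_div_pow (c : ℝ) (n : ℕ) :
    deriv (fun u : ℝ => c / u ^ n) = fun u => -(n * c) / u ^ (n + 1) := by
  ext u
  have hzpow : (fun u : ℝ => c / u ^ n) = fun u => c * u ^ (-n : ℤ) := by
    simp [div_eq_mul_inv]
  rw [hzpow, deriv_const_mul_field, deriv_zpow, ← neg_add', zpow_neg]
  norm_cast
  push_cast
  ring

lemma contDiffOn_const_div_pow (c : ℝ) (n : ℕ) {I : Set ℝ} (hI : 0 ∉ I) {m : WithTop ℕ∞} :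
    ContDiffOn ℝ m (fun u : ℝ => c / u ^ n) I :=
  contDiffOn_const.div (contDiffOn_id.pow n) fun _ hu => pow_ne_zero n (ne_of_mem_of_not_mem hu hI)

lemma contDiffOn_inverseSquare : ContDiffOn ℝ ∞ (fun u : ℝ => 3 / 16 / u ^ 2) (Set.Ioi 0) :=
  contDiffOn_const_div_pow _ 2 (lt_irrefl _)

lemma isKillingTensor_KTtwo :
    IsKillingTensor (planeWave fun u => 3 / 16 / u ^ 2) (slab (Set.Ioi 0)) KTtwo := by
  have hA := contDiffOn_inverseSquare
  refine isKillingTensor_of_killingEquationsAt (isPPProfile_planeWave isOpen_Ioi hA)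
    (fun a b p hp => ?smooth) (fun p a b => ?symm) fun p hp => ?killing
  case smooth =>
    have hp0 : p 0 ≠ 0 := ne_of_gt hp
    refine ContDiffAt.contDiffWithinAt ?_
    unfold KTtwo
    fun_prop (disch := assumption)
  case symm => simp only [KTtwo, sd_comm _ _ a b]
  case killing =>
    have hp0 : 0 < p 0 := hp
    have hne := hp0.ne'
    have hAp := differentiableAt_of_mem isOpen_Ioi hA hp
    have h12 : p 0 ^ (-(1 : ℝ) / 2) = p 0 ^ ((1 : ℝ) / 2) / p 0 := by
      rw [← Real.rpow_sub_one hne]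
      norm_num
    have h32 : p 0 ^ (-(3 : ℝ) / 2) = p 0 ^ ((1 : ℝ) / 2) / p 0 ^ 2 := by
      rw [← Real.rpow_sub_natCast hne]
      norm_num
    have h52 : p 0 ^ (-(5 : ℝ) / 2) = p 0 ^ ((1 : ℝ) / 2) / p 0 ^ 3 := by
      rw [← Real.rpow_sub_natCast hne]
      norm_num
    refine ⟨?uuu, fun a ha => ?uua, fun a ha b hb => ?uab, fun a ha b hb c hc => ?abc⟩
    all_goals
      simp (disch := first | assumption | decide | fun_prop (disch := assumption)) only [KTtwo, sd,
        kd_self, kd_of_ne, kd_zero_of_ne, mul_zero, zero_mul, mul_one, one_mul, add_zero, zero_add,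
        sub_zero, zero_div, pd_mul, pd_neg, pd_add, pd_sub, pd_pow, pd_coord, pd_const,
        pd_rpow_const, pd_planeWave, deriv_const_div_pow, h12, h32, h52]
    case abc => ring
    all_goals field

lemma isKillingTensor_KTfour :
    IsKillingTensor (planeWave fun u => 3 / 16 / u ^ 2) (slab (Set.Ioi 0)) KTfour := by
  have hA := contDiffOn_inverseSquare
  refine isKillingTensor_of_killingEquationsAt (isPPProfile_planeWave isOpen_Ioi hA)
    (fun a b p hp => ?smooth) (fun p a b => ?symm) fun p hp => ?killing
  case smooth =>
    have hp0 : p 0 ≠ 0 := ne_of_gt hp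
    refine ContDiffAt.contDiffWithinAt ?_
    unfold KTfour
    fun_prop (disch := simp [hp0])
  case symm => simp only [KTfour, sd_comm _ _ a b]
  case killing =>
    have hp0 : 0 < p 0 := hp
    have hne := hp0.ne'
    have hAp := differentiableAt_of_mem isOpen_Ioi hA hp
    refine ⟨?uuu, fun a ha => ?uua, fun a ha b hb => ?uab, fun a ha b hb c hc => ?abc⟩
    all_goals
      simp (disch := first | assumption | decide | exact pow_ne_zero _ hne |
        fun_prop (disch := simp [hne])) only [KTfour, sd, kd_self, kd_of_ne, kd_zero_of_ne,
        mul_zero, zero_mul, mul_one, one_mul, add_zero, zero_add, sub_zero, zero_div, pd_mul,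
        pd_neg, pd_add, pd_sub, pd_pow, pd_div, pd_coord, pd_const, pd_planeWave,
        deriv_const_div_pow]
    case abc => ring
    all_goals field

lemma KTtwo_yy (p : Pt) :
    KTtwo p 2 2 = -2 * p 0 ^ ((1 : ℝ) / 2) * p 1 + 1 / 4 * p 0 ^ (-(1 : ℝ) / 2) * p 3 ^ 2 := by
  simp (disch := decide) only [KTtwo, sd, kd_self, kd_of_ne]
  ring

lemma KTfour_yy (p : Pt) : KTfour p 2 2 = p 1 - 1 / 8 * p 3 ^ 2 / p 0 := by
  simp (disch := decide) only [KTfour, sd, kd_self, kd_of_ne]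
  ring

lemma IsReducible.pd_v_yy_eq_zero_of_planeWave {K : Pt → Fin 4 → Fin 4 → ℝ}
    (hK : IsReducible (planeWave fun u => 3 / 16 / u ^ 2) (slab (Set.Ioi 0)) K) :
    pd 1 (fun q => K q 2 2) (Pi.single 0 1) = 0 := by
  have hA := contDiffOn_inverseSquare
  have hp : (Pi.single 0 1 : Pt) ∈ slab (Set.Ioi 0) := by simp [slab]
  exact hK.pd_v_eq_zero (isPPProfile_planeWave isOpen_Ioi hA) hp
    (hasNondegenerateHessian_planeWave isOpen_Ioi hA hp (by norm_num)) (by decide) (by decide)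

lemma not_isReducible_KTtwo :
    ¬IsReducible (planeWave fun u => 3 / 16 / u ^ 2) (slab (Set.Ioi 0)) KTtwo := fun hK => by
  have hp : (0 : ℝ) < (Pi.single 0 1 : Pt) 0 := by simp
  have hne := hp.ne'
  have hv := hK.pd_v_yy_eq_zero_of_planeWave
  simp (disch := first | assumption | decide | fun_prop (disch := assumption)) only [KTtwo_yy,
    pd_add, pd_mul, pd_pow, pd_rpow_const, pd_const, pd_coord, kd_self, kd_of_ne] at hv
  norm_num at hv

lemma not_isReducible_KTfour :
    ¬IsReducible (planeWave fun u => 3 / 16 / u ^ 2) (slab (Set.Ioi 0)) KTfour := fun hK => by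
  have hne : (Pi.single 0 1 : Pt) 0 ≠ 0 := by simp
  have hv := hK.pd_v_yy_eq_zero_of_planeWave
  simp (disch := first | assumption | decide | fun_prop (disch := assumption)) only [KTfour_yy,
    pd_sub, pd_mul, pd_div, pd_pow, pd_const, pd_coord, kd_self, kd_of_ne] at hv
  norm_num at hv

lemma isKillingTensor_KTone_inverseSquare :
    IsKillingTensor (planeWave fun u => 3 / 16 / u ^ 2) (slab (Set.Ioi 0))
      (KTone fun u => 3 / 16 / u ^ 2) := by
  refine isKillingTensor_KTone isOpen_Ioi contDiffOn_inverseSquare (fun u hu => ?_)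
    fun u hu => ?_
  · have : 0 < u := hu
    positivity
  · have : u ≠ 0 := ne_of_gt hu
    simp only [deriv_const_div_pow]
    field

lemma not_isReducible_KTone_inverseSquare :
    ¬IsReducible (planeWave fun u => 3 / 16 / u ^ 2) (slab (Set.Ioi 0))
      (KTone fun u => 3 / 16 / u ^ 2) := by
  refine not_isReducible_KTone isOpen_Ioi contDiffOn_inverseSquare (fun u hu => ?_)
    Set.nonempty_Ioi
  have : 0 < u := hu
  positivity

lemma deriv_deriv_rpow_three_quarters {u : ℝ} (hu : 0 < u) :
    deriv (deriv fun u : ℝ => u ^ ((3 : ℝ) / 4)) u = -(3 / 16 / u ^ 2) * u ^ ((3 : ℝ) / 4) := by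
  rw [Real.deriv_rpow_const', deriv_const_mul_field, Real.deriv_rpow_const,
    Real.rpow_sub_one hu.ne', Real.rpow_sub_one hu.ne']
  field

lemma contDiffOn_rpow_Ioi (r : ℝ) : ContDiffOn ℝ ∞ (fun u : ℝ => u ^ r) (Set.Ioi 0) :=
  contDiffOn_id.rpow_const_of_ne fun _ hu => ne_of_gt hu

lemma isKillingTensor_KTeight_inverseSquare :
    IsKillingTensor (planeWave fun u => 3 / 16 / u ^ 2) (slab (Set.Ioi 0))
      (KTeight (fun u => 3 / 16 / u ^ 2) fun u => u ^ ((3 : ℝ) / 4)) := by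
  refine isKillingTensor_KTeight isOpen_Ioi contDiffOn_inverseSquare (contDiffOn_rpow_Ioi _)
    (fun u hu => deriv_deriv_rpow_three_quarters hu) fun u hu => ?_
  have hne : u ≠ 0 := ne_of_gt hu
  simp only [deriv_const_div_pow, Real.deriv_rpow_const, Real.rpow_sub_one hne]
  field

lemma not_isReducible_KTeight_inverseSquare :
    ¬IsReducible (planeWave fun u => 3 / 16 / u ^ 2) (slab (Set.Ioi 0))
      (KTeight (fun u => 3 / 16 / u ^ 2) fun u => u ^ ((3 : ℝ) / 4)) := by
  refine not_isReducible_KTeight isOpen_Ioi contDiffOn_inverseSquare (contDiffOn_rpow_Ioi _)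
    (fun u hu => ?_) (fun u hu => deriv_deriv_rpow_three_quarters hu)
    (Set.mem_Ioi.2 one_pos) ?_
  · have : u ≠ 0 := ne_of_gt hu
    positivity
  · simp

end InverseSquare

/-- For the conformally flat plane wave with `A(u) = (3/16)u⁻²` on
`{u > 0}`, the six tensor fields `K₁, K₂, K₃ = K₂(y↔z), K₄, K₈ (with Γ = u^{3/4})` and
`K₁₀ = K₈(y↔z)` are irreducible Killing tensors. -/
theorem stmt7 :
    let U : Set Pt := {p | 0 < p 0}
    let A : ℝ → ℝ := fun u => 3 / 16 / u ^ 2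
    let H : Pt → ℝ := fun p => A (p 0) * ((p 2) ^ 2 + (p 3) ^ 2) / 2
    let Γf : ℝ → ℝ := fun u => u ^ ((3 : ℝ) / 4)
    ∀ K ∈ ({KTone A, KTtwo, swapYZ KTtwo, KTfour, KTeight A Γf,
        swapYZ (KTeight A Γf)} : Set (Pt → Fin 4 → Fin 4 → ℝ)),
      IsKillingTensor H U K ∧ ¬ IsReducible H U K := by
  intro U A H Γf K hK
  have hswap : ∀ K, IsKillingTensor H U K ∧ ¬IsReducible H U K →
      IsKillingTensor H U (swapYZ K) ∧ ¬IsReducible H U (swapYZ K) := fun K hK =>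
    ⟨isKillingTensor_swapYZ (planeWave_swapPt A) (mapsTo_swapPt_slab (Set.Ioi 0)) hK.1,
      not_isReducible_swapYZ (planeWave_swapPt A) (mapsTo_swapPt_slab (Set.Ioi 0)) hK.2⟩
  have h₁ : IsKillingTensor H U (KTone A) ∧ ¬IsReducible H U (KTone A) :=
    ⟨isKillingTensor_KTone_inverseSquare, not_isReducible_KTone_inverseSquare⟩
  have h₂ : IsKillingTensor H U KTtwo ∧ ¬IsReducible H U KTtwo :=
    ⟨isKillingTensor_KTtwo, not_isReducible_KTtwo⟩
  have h₄ : IsKillingTensor H U KTfour ∧ ¬IsReducible H U KTfour :=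
    ⟨isKillingTensor_KTfour, not_isReducible_KTfour⟩
  have h₈ : IsKillingTensor H U (KTeight A Γf) ∧ ¬IsReducible H U (KTeight A Γf) :=
    ⟨isKillingTensor_KTeight_inverseSquare, not_isReducible_KTeight_inverseSquare⟩
  rcases hK with rfl | rfl | rfl | rfl | rfl | rfl
  exacts [h₁, h₂, hswap _ h₂, h₄, h₈, hswap _ h₈]

end
end
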